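/- Let X be a pure d-dimensional α-skeleton expander with d > 1 and 0 < α < (2^(1/2^d) − 1)/√2. Then for every 0 ≤ i < d the high order random walk on dimension i of X (taken lazy for i = 0) is μ-rapidly mixing for μ = 1 − (1/(2(d+1)²))·((2^(1/2^d) − 1 − √2·α)/(2√2·d))^(2d). -/

import Mathlib

/-!
The proof bounds the quadratic form of the walk on functions orthogonal to the constants, and
turns that bound into `L²` contraction. Write `k = i + 1` for the cardinality of the faces walked
on, weight every face by its degree, and set `g = (1/2 - α)²/2`.

* *Local gaps.* A set of at most half of the weight of a link has `‖S‖ ≤ 1/2`, so skeleton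
  expansion gives `‖E(S)‖ ≤ (1/2 + α) ‖S‖`, i.e. conductance at least `1/2 - α` (`link_cut`).
  Cheeger's inequality (`cheeger`) then yields the spectral gap `g` for the 1-skeleton of every
  link (`link_gap`).
* *Local to global.* The form of the walk on faces of cardinality `k + 1` is the sum over faces
  `τ` of cardinality `k` of the adjacency forms of the links (`link_form`). Applying the local gap
  in each link leaves the link means of `f`, i.e. the down operator, as error term. The down
  operator is adjoint to the up operator (`down_adjoint`), hence is controlled by the same
  statement one dimension lower. By induction the walk on faces of cardinality `k` has spectral
  gap at least `g ^ k / k` (`up_contract`).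
* *Negative eigenvalues.* The form of the walk is that of the positive semidefinite up-down walk
  minus its holding part (`up_form`), so all eigenvalues are at least `-1 / k`. This is at least
  `-1/2` for `i > 0`, and for `i = 0` laziness makes the walk positive semidefinite.
* *Mixing.* Polarization turns the bound `μ` on the form into contraction by `μ` in the norm
  weighted by inverse degrees; comparing this norm with the Euclidean one costs
  `√(dmax/dmin)` (`rapidMixing_of_form`).

The rate in the theorem is weaker than `1 - g ^ k / k` (and `1 - g / 2` in the lazy case), by
`numerics`.
-/

open Finset

open scoped Classical

noncomputable section

/-- A pure `d`-dimensional simplicial complex on a finite vertex set `V`: a collection of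
finite subsets of `V` (the faces), containing the empty face, closed under taking subsets,
in which every face is contained in a face of cardinality `d+1`. -/
structure SC (V : Type) [DecidableEq V] [Fintype V] (d : ℕ) where
  faces : Finset (Finset V)
  empty_mem : ∅ ∈ faces
  down_closed : ∀ σ ∈ faces, ∀ τ ⊆ σ, τ ∈ faces
  pure : ∀ σ ∈ faces, ∃ τ ∈ faces, σ ⊆ τ ∧ τ.card = d + 1

namespace SC

variable {V : Type} [DecidableEq V] [Fintype V] {d : ℕ}

/-- The faces of cardinality `k`, i.e. the set `X(k-1)` of `(k-1)`-dimensional faces. -/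
def fc (X : SC V d) (k : ℕ) : Finset (Finset V) :=
  X.faces.filter fun σ => σ.card = k

/-- The degree of a face: the number of top (`d`-dimensional) faces containing it. -/
def deg (X : SC V d) (σ : Finset V) : ℕ :=
  ((X.fc (d + 1)).filter fun τ => σ ⊆ τ).card

/-- The norm of a set `W` of faces of cardinality `k`:
`‖W‖ = (Σ_{σ∈W} deg σ) / (Σ_{τ∈X(k-1)} deg τ)`. -/
def norm (X : SC V d) (k : ℕ) (W : Finset (Finset V)) : ℝ :=
  (∑ σ ∈ (X.fc k).filter (· ∈ W), (X.deg σ : ℝ)) / ∑ σ ∈ X.fc k, (X.deg σ : ℝ)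

/-- `‖A_σ‖_σ`: the norm, computed inside the link of `σ`, of the localization to the link
of a set `A` of cardinality-`k` faces of `X`.  (The faces of the link of `σ` correspond
bijectively to the faces `ρ ⊇ σ` of `X` via `τ ↦ σ ∪ τ`, and this correspondence
preserves degrees.) -/
def linkNorm (X : SC V d) (σ : Finset V) (k : ℕ) (A : Finset (Finset V)) : ℝ :=
  (∑ ρ ∈ (X.fc k).filter (fun ρ => σ ⊆ ρ ∧ ρ ∈ A), (X.deg ρ : ℝ)) /
    ∑ ρ ∈ (X.fc k).filter (fun ρ => σ ⊆ ρ), (X.deg ρ : ℝ)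

/-- For a set `S` of vertices, the norm `‖·‖_σ` in the link of `σ` of the set of
`(m-1)`-dimensional faces of the link all of whose vertices lie in `S`.
For `m = 1` this is `‖S‖_σ` and for `m = 2` it is `‖E(S)‖_σ`. -/
def linkSubsetNorm (X : SC V d) (σ : Finset V) (m : ℕ) (S : Finset V) : ℝ :=
  (∑ ρ ∈ (X.fc (σ.card + m)).filter (fun ρ => σ ⊆ ρ ∧ ρ \ σ ⊆ S), (X.deg ρ : ℝ)) /
    ∑ ρ ∈ (X.fc (σ.card + m)).filter (fun ρ => σ ⊆ ρ), (X.deg ρ : ℝ)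

/-- `X` is an `α`-skeleton expander: for every face `σ ∈ X` (including `σ = ∅`) and every
set `S` of vertices of the link of `σ`, `‖E(S)‖_σ ≤ ‖S‖_σ (‖S‖_σ + α)`. -/
def IsSkeletonExpander (X : SC V d) (α : ℝ) : Prop :=
  ∀ σ ∈ X.faces, ∀ S : Finset V,
    X.linkSubsetNorm σ 2 S ≤ X.linkSubsetNorm σ 1 S * (X.linkSubsetNorm σ 1 S + α)

/-- The expanding faces `ψ(W)` of a set `W` of cardinality-`k` faces: the
cardinality-`(k+1)` faces containing both a cardinality-`k` face in `W` and a
cardinality-`k` face not in `W`. -/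
def psi (X : SC V d) (k : ℕ) (W : Finset (Finset V)) : Finset (Finset V) :=
  (X.fc (k + 1)).filter fun τ =>
    (∃ σ ⊆ τ, σ.card = k ∧ σ ∈ W) ∧ ∃ σ ⊆ τ, σ.card = k ∧ σ ∉ W

/-- `X` is an `ε`-colorful expander: for every `0 ≤ i < d` and every `i`-cochain `W` with
`0 < ‖W‖ ≤ 1/2`, one has `‖ψ(W)‖/‖W‖ ≥ ε`. -/
def IsColorfulExpander (X : SC V d) (ε : ℝ) : Prop :=
  ∀ i : ℕ, i < d → ∀ W ⊆ X.fc (i + 1),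
    0 < X.norm (i + 1) W → X.norm (i + 1) W ≤ 1 / 2 →
    ε ≤ X.norm (i + 2) (X.psi (i + 1) W) / X.norm (i + 1) W

/-- The container `Γ(W)` of a set `W` of cardinality-`k` faces: the cardinality-`(k+1)`
faces containing at least one cardinality-`k` face of `W`. -/
def container (X : SC V d) (k : ℕ) (W : Finset (Finset V)) : Finset (Finset V) :=
  (X.fc (k + 1)).filter fun τ => ∃ σ ⊆ τ, σ.card = k ∧ σ ∈ W

/-- Fat faces: for an `i`-cochain `W` and fatness constant `η`, `X.fat i W η m` is the
set `S^{i-m}(W)` of fat faces of dimension `i - m` (so of cardinality `i + 1 - m`);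
`m = i + 1` gives `S^{-1}(W)`. -/
def fat (X : SC V d) (i : ℕ) (W : Finset (Finset V)) (η : ℝ) : ℕ → Finset (Finset V)
  | 0 => (X.fc (i + 1)).filter (· ∈ W)
  | m + 1 => (X.fc (i - m)).filter fun σ =>
      η ^ 2 ^ m ≤ X.linkNorm σ (i - m + 1) (fat X i W η m)

/-- Full faces: `X.full i W η j` is `F^j(W)`, the set of cardinality-`(j+1)` faces all of
whose cardinality-`j` subsets lie in `S^{j-1}(W) = X.fat i W η (i + 1 - j)`. -/
def full (X : SC V d) (i : ℕ) (W : Finset (Finset V)) (η : ℝ) (j : ℕ) :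
    Finset (Finset V) :=
  (X.fc (j + 1)).filter fun τ => ∀ σ ⊆ τ, σ.card = j → σ ∈ X.fat i W η (i + 1 - j)

/-- `X.prNI ka kb A B` is the probability `Pr[P_{ka-1} ∈ A ∧ P_{kb-1} ∉ B]` for the chain
`P_d ⊃ P_{d-1} ⊃ ⋯` in which `P_d` is a uniformly random top face and each `P_{l-1}` is
obtained from `P_l` by deleting a uniformly random vertex.  (Given `P_{ka-1} = σ`,
the face `P_{kb-1}` is a uniformly random cardinality-`kb` subset of `σ`, and
`Pr[P_{ka-1} = σ] = deg σ / Σ_{τ ∈ X(ka-1)} deg τ`.) -/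
def prNI (X : SC V d) (ka kb : ℕ) (A B : Finset (Finset V)) : ℝ :=
  (∑ σ ∈ (X.fc ka).filter (· ∈ A),
      (X.deg σ : ℝ) * (((σ.powersetCard kb).filter (· ∉ B)).card : ℝ)) /
    ((ka.choose kb : ℝ) * ∑ σ ∈ X.fc ka, (X.deg σ : ℝ))

end SC

/-! ### Multigraphs, given by symmetric adjacency-count matrices -/

/-- Degree of a vertex in the multigraph with adjacency counts `A`. -/
def mdeg {U : Type} [Fintype U] (A : U → U → ℕ) (v : U) : ℕ := ∑ u, A v u

/-- The transition matrix `DA` of the random walk on the multigraph `A`. -/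
def transition {U : Type} [Fintype U] (A : U → U → ℕ) : Matrix U U ℝ :=
  Matrix.of fun u v => (A u v : ℝ) / (mdeg A u : ℝ)

/-- The normalized adjacency matrix `Ã = D^(1/2) A D^(1/2)`. -/
def normAdj {U : Type} [Fintype U] (A : U → U → ℕ) : Matrix U U ℝ :=
  Matrix.of fun u v => (A u v : ℝ) / (Real.sqrt (mdeg A u) * Real.sqrt (mdeg A v))

/-- The stationary distribution `π(v) = deg v / Σ_u deg u`. -/
def statDist {U : Type} [Fintype U] (A : U → U → ℕ) (v : U) : ℝ :=
  (mdeg A v : ℝ) / ∑ u, (mdeg A u : ℝ)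

/-- Maximum degree. -/
def dmaxDeg {U : Type} [Fintype U] (A : U → U → ℕ) : ℕ := ⨆ v, mdeg A v

/-- Minimum degree. -/
def dminDeg {U : Type} [Fintype U] (A : U → U → ℕ) : ℕ := ⨅ v, mdeg A v

/-- The random walk on the multigraph `A` is `μ`-rapidly mixing: for every initial
probability distribution `π0` and every `t`, `‖π0 (DA)^t − π‖₂ ≤ √(dmax/dmin) μ^t`. -/
def IsRapidMixing {U : Type} [Fintype U] [DecidableEq U] (A : U → U → ℕ) (μ : ℝ) : Prop :=
  ∀ π0 : U → ℝ, (∀ v, 0 ≤ π0 v) → ∑ v, π0 v = 1 → ∀ t : ℕ,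
    Real.sqrt (∑ v, (Matrix.vecMul π0 (transition A ^ t) v - statDist A v) ^ 2) ≤
      Real.sqrt ((dmaxDeg A : ℝ) / (dminDeg A : ℝ)) * μ ^ t

/-- The lazy version of a multigraph: add `deg v` self-loops at every vertex `v`. -/
def lazy {U : Type} [Fintype U] [DecidableEq U] (A : U → U → ℕ) : U → U → ℕ :=
  fun u v => A u v + if u = v then mdeg A u else 0

/-- `|E(S, S̄)|`: the number of edges with one endpoint in `S` and one in its complement. -/
def cutEdges {U : Type} [Fintype U] [DecidableEq U] (A : U → U → ℕ) (S : Finset U) : ℝ :=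
  ∑ u ∈ S, ∑ v ∈ Sᶜ, (A u v : ℝ)

/-- `vol S = Σ_{v ∈ S} deg v`. -/
def vol {U : Type} [Fintype U] (A : U → U → ℕ) (S : Finset U) : ℝ :=
  ∑ v ∈ S, (mdeg A v : ℝ)

/-- The conductance `Φ(G) = min { |E(S,S̄)|/vol S : ∅ ≠ S, vol S ≤ vol V / 2 }`. -/
def conductance {U : Type} [Fintype U] [DecidableEq U] (A : U → U → ℕ) : ℝ :=
  sInf { x : ℝ | ∃ S : Finset U, S.Nonempty ∧ vol A S ≤ vol A Finset.univ / 2 ∧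
    x = cutEdges A S / vol A S }

/-- `|E(T)|`: the number of edges with both endpoints in `T`. -/
def edgesWithin {U : Type} [Fintype U] (A : U → U → ℕ) (T : Finset U) : ℝ :=
  ((∑ u ∈ T, ∑ v ∈ T, (A u v : ℝ)) + ∑ v ∈ T, (A v v : ℝ)) / 2

/-- The bipartiteness ratio
`β(G) = min {(|E(S,S̄)| + 2(|E(S1)| + |E(S2)|))/vol S : S = S1 ⊔ S2 ≠ ∅}`. -/
def bipRatio {U : Type} [Fintype U] [DecidableEq U] (A : U → U → ℕ) : ℝ :=
  sInf { x : ℝ | ∃ S1 S2 : Finset U, (S1 ∪ S2).Nonempty ∧ Disjoint S1 S2 ∧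
    x = (cutEdges A (S1 ∪ S2) + 2 * (edgesWithin A S1 + edgesWithin A S2)) /
      vol A (S1 ∪ S2) }

/-- The adjacency counts of the `i`-graph `G_i(X)`: its vertices are the `i`-faces of `X`
(cardinality `i+1`), and two neighboring `i`-faces `σ ∼ τ` (i.e. `σ ∪ τ ∈ X(i+1)`) are
joined by `deg (σ ∪ τ)` parallel edges. -/
def SC.adjG {V : Type} [DecidableEq V] [Fintype V] {d : ℕ} (X : SC V d) (i : ℕ) :
    {σ // σ ∈ X.fc (i + 1)} → {σ // σ ∈ X.fc (i + 1)} → ℕ :=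
  fun σ τ => if σ.1 ∪ τ.1 ∈ X.fc (i + 2) then X.deg (σ.1 ∪ τ.1) else 0

end

/-! ### Cheeger's inequality for weighted graphs -/

/-- A layer-cake bound: if every set `S` of `D`-measure at most `M` satisfies
`W(S, S) ≤ c D(S)`, then `Σ W(u,v) min(G u, G v) ≤ c Σ D G` for every nonnegative `G`
supported on a set of measure at most `M`. The induction is on the size of the support and
peels off the lowest level of `G`. -/
lemma min_form_le {V : Type} [Fintype V] (W : V → V → ℝ) (D : V → ℝ) (c : ℝ) (M : ℝ)
    (hD : ∀ u, 0 ≤ D u)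
    (hcut : ∀ S : Finset V, ∑ u ∈ S, D u ≤ M → ∑ u ∈ S, ∑ v ∈ S, W u v ≤ c * ∑ u ∈ S, D u)
    (n : ℕ) : ∀ G : V → ℝ, (∀ u, 0 ≤ G u) → (univ.filter fun u => G u ≠ 0).card = n →
      ∑ u ∈ univ.filter (fun u => G u ≠ 0), D u ≤ M →
      ∑ u, ∑ v, W u v * min (G u) (G v) ≤ c * ∑ u, D u * G u := by
  induction n using Nat.strong_induction_on with
  | _ n ih =>
    intro G hG hn hM
    set S := univ.filter (fun u => G u ≠ 0) with hS
    by_cases hne : S.Nonempty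
    · obtain ⟨s, hs, hmin⟩ := S.exists_min_image G hne
      have hout : ∀ u, u ∉ S → G u = 0 := by
        intro u hu
        simpa [hS] using hu
      set G' : V → ℝ := fun u => if u ∈ S then G u - G s else 0 with hG'
      have hG'0 : ∀ u, 0 ≤ G' u := by
        intro u
        by_cases hu : u ∈ S
        · simp [hG', hu, hmin u hu]
        · simp [hG', hu]
      have hsub : (univ.filter fun u => G' u ≠ 0) ⊂ S := by
        refine (Finset.ssubset_iff_of_subset ?_).2 ⟨s, hs, ?_⟩
        · intro u hu
          by_contra h
          simp [hG', h] at hu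
        · simp [hG']
      have h1 := ih _ (hn ▸ Finset.card_lt_card hsub) G' hG'0 rfl
        ((Finset.sum_le_sum_of_subset_of_nonneg hsub.1 fun u _ _ => hD u).trans hM)
      have h2 := hcut S hM
      have e1 : ∑ u, D u * G u = ∑ u, D u * G' u + G s * ∑ u ∈ S, D u := by
        rw [← Finset.sum_ite_mem_eq S D, Finset.mul_sum, ← Finset.sum_add_distrib]
        refine Finset.sum_congr rfl fun u _ => ?_
        by_cases hu : u ∈ S
        · simp only [hG', hu, if_true]; ring
        · simp [hG', hu, hout u hu]
      have e2 : ∑ u, ∑ v, W u v * min (G u) (G v)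
          = ∑ u, ∑ v, W u v * min (G' u) (G' v) + G s * ∑ u ∈ S, ∑ v ∈ S, W u v := by
        rw [← Finset.sum_ite_mem_eq S, Finset.mul_sum, ← Finset.sum_add_distrib]
        refine Finset.sum_congr rfl fun u _ => ?_
        by_cases hu : u ∈ S
        · rw [if_pos hu, ← Finset.sum_ite_mem_eq S, Finset.mul_sum, ← Finset.sum_add_distrib]
          refine Finset.sum_congr rfl fun v _ => ?_
          by_cases hv : v ∈ S
          · simp only [hG', hu, hv, if_true, min_sub_sub_right]; ring
          · have := hG'0 u
            simp only [hG', hu, if_true] at this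
            simp [hG', hu, hv, hout v hv, hG u, hmin u hu]
        · rw [if_neg hu, mul_zero, add_zero]
          refine Finset.sum_congr rfl fun v _ => ?_
          have := hG'0 v
          have := hG v
          simp only [hG', hu, hout u hu, if_false]
          rw [min_eq_left (by assumption), min_eq_left (hG'0 v)]
      rw [e1, e2, mul_add]
      have := mul_le_mul_of_nonneg_left h2 (hG s)
      linarith
    · have h0 : ∀ u, G u = 0 := by
        intro u
        by_contra h
        exact hne ⟨u, by simp [hS, h]⟩
      simp [h0]

/-- The Dirichlet form bound at the heart of Cheeger's inequality, for a function supported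
on at most half of the total weight. -/
lemma cheeger_half {V : Type} [Fintype V] (W : V → V → ℝ) (D : V → ℝ) (h : ℝ)
    (hW : ∀ u v, 0 ≤ W u v) (hsymm : ∀ u v, W u v = W v u) (hWD : ∀ u, D u = ∑ v, W u v)
    (hh : 0 ≤ h)
    (hcut : ∀ S : Finset V, ∑ u ∈ S, D u ≤ (∑ u, D u) / 2 →
      ∑ u ∈ S, ∑ v ∈ S, W u v ≤ (1 - h) * ∑ u ∈ S, D u)
    (g : V → ℝ)
    (hM : ∑ u ∈ univ.filter (fun u => g u ≠ 0), D u ≤ (∑ u, D u) / 2) :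
    h ^ 2 * ∑ u, D u * g u ^ 2 ≤ ∑ u, ∑ v, W u v * (g u - g v) ^ 2 := by
  have hD : ∀ u, 0 ≤ D u := fun u => by rw [hWD]; exact Finset.sum_nonneg fun v _ => hW u v
  have hmarg1 : ∀ F : V → ℝ, ∑ u, ∑ v, W u v * F u = ∑ u, D u * F u := fun F => by
    simp_rw [hWD, Finset.sum_mul]
  have hmarg2 : ∀ F : V → ℝ, ∑ u, ∑ v, W u v * F v = ∑ u, D u * F u := fun F => by
    rw [Finset.sum_comm, ← hmarg1]
    exact Finset.sum_congr rfl fun u _ => Finset.sum_congr rfl fun v _ => by rw [hsymm]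
  have h1 := min_form_le W D (1 - h) _ hD hcut _ (fun u => g u ^ 2) (fun u => sq_nonneg _) rfl
    (by simpa using hM)
  set Z := ∑ u, D u * g u ^ 2 with hZ
  set E := ∑ u, ∑ v, W u v * (g u - g v) ^ 2 with hE
  set R := ∑ u, ∑ v, W u v * |g u ^ 2 - g v ^ 2| with hR
  have hZ0 : 0 ≤ Z := Finset.sum_nonneg fun u _ => mul_nonneg (hD u) (sq_nonneg _)
  have hE0 : 0 ≤ E := Finset.sum_nonneg fun u _ => Finset.sum_nonneg fun v _ =>
    mul_nonneg (hW u v) (sq_nonneg _)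
  have hR1 : R = 2 * Z - 2 * ∑ u, ∑ v, W u v * min (g u ^ 2) (g v ^ 2) := by
    have : R = ∑ u, ∑ v, W u v * g u ^ 2 + ∑ u, ∑ v, W u v * g v ^ 2
        - 2 * ∑ u, ∑ v, W u v * min (g u ^ 2) (g v ^ 2) := by
      simp only [hR, Finset.mul_sum, ← Finset.sum_add_distrib, ← Finset.sum_sub_distrib]
      refine Finset.sum_congr rfl fun u _ => Finset.sum_congr rfl fun v _ => ?_
      rcases le_total (g u ^ 2) (g v ^ 2) with hh | hh
      · rw [min_eq_left hh, abs_of_nonpos (by linarith)]; ring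
      · rw [min_eq_right hh, abs_of_nonneg (by linarith)]; ring
    rw [this, hmarg1 (fun u => g u ^ 2), hmarg2 (fun u => g u ^ 2)]; ring
  have hR2 : 2 * h * Z ≤ R := by rw [hR1]; linarith
  have hCS : R ^ 2 ≤ E * ∑ u, ∑ v, W u v * (g u + g v) ^ 2 := by
    simp only [hR, hE, ← Finset.sum_product']
    refine Finset.sum_sq_le_sum_mul_sum_of_sq_le_mul _ (fun p _ => mul_nonneg (hW _ _) (sq_nonneg _))
      (fun p _ => mul_nonneg (hW _ _) (sq_nonneg _)) fun p _ => ?_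
    rw [mul_pow, sq_abs]; exact le_of_eq (by ring)
  have hP : ∑ u, ∑ v, W u v * (g u + g v) ^ 2 ≤ 4 * Z := by
    have : ∑ u, ∑ v, W u v * (g u + g v) ^ 2 ≤
        2 * ∑ u, ∑ v, W u v * g u ^ 2 + 2 * ∑ u, ∑ v, W u v * g v ^ 2 := by
      simp only [Finset.mul_sum, ← Finset.sum_add_distrib]
      refine Finset.sum_le_sum fun u _ => Finset.sum_le_sum fun v _ => ?_
      nlinarith [mul_nonneg (hW u v) (sq_nonneg (g u - g v))]
    rw [hmarg1 (fun u => g u ^ 2), hmarg2 (fun u => g u ^ 2)] at this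
    linarith
  rcases hZ0.eq_or_lt with h0 | h0
  · rw [← h0]; simpa using hE0
  · have h4 : (2 * h * Z) ^ 2 ≤ E * (4 * Z) :=
      (pow_le_pow_left₀ (by positivity) hR2 2).trans
        (hCS.trans (mul_le_mul_of_nonneg_left hP hE0))
    have h5 : (h ^ 2 * Z) * (4 * Z) ≤ E * (4 * Z) := by nlinarith
    exact le_of_mul_le_mul_right h5 (by positivity)

/-- A weighted median `c` of `f`: each strict side of `c` carries at most half of the total
weight. The second alternative covers weights whose total is negative. -/
lemma exists_median {V : Type} [Fintype V] [Nonempty V] (D : V → ℝ) (f : V → ℝ) :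
    ∃ c : ℝ, ∑ u ∈ univ.filter (fun u => c < f u), D u ≤ (∑ u, D u) / 2 ∧
      ∑ u ∈ univ.filter (fun u => f u < c), D u ≤ (∑ u, D u) / 2 ∨ (∑ u, D u) < 0 := by
  by_cases hneg : (∑ u, D u) < 0
  · exact ⟨0, Or.inr hneg⟩
  push Not at hneg
  set T := univ.filter fun u : V =>
    ∑ v ∈ univ.filter (fun v => f u < f v), D v ≤ (∑ u, D u) / 2 with hT
  have hTne : T.Nonempty := by
    obtain ⟨s, -, hs⟩ := (univ : Finset V).exists_max_image f univ_nonempty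
    refine ⟨s, ?_⟩
    have : univ.filter (fun v => f s < f v) = ∅ := by
      ext v; simpa using hs v (mem_univ v)
    simp only [hT, mem_filter, mem_univ, true_and, this, sum_empty]
    linarith
  obtain ⟨s, hs, hmin⟩ := T.exists_min_image f hTne
  refine ⟨f s, Or.inl ⟨by simpa [hT] using hs, ?_⟩⟩
  by_cases hne : (univ.filter fun u => f u < f s).Nonempty
  · obtain ⟨v, hv, hmax⟩ := Finset.exists_max_image _ f hne
    have hvT : v ∉ T := fun h => by
      have := hmin v h
      simp at hv; linarith
    have h1 : univ.filter (fun u => f u < f s) = univ.filter (fun u => ¬ f v < f u) := by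
      ext u
      simp only [mem_filter, mem_univ, true_and, not_lt] at hmax hv ⊢
      exact ⟨fun h => hmax u h, fun h => h.trans_lt hv⟩
    have h2 := Finset.sum_filter_add_sum_filter_not univ (fun u => f v < f u) D
    simp only [hT, mem_filter, mem_univ, true_and, not_le] at hvT
    rw [h1]; linarith
  · rw [Finset.not_nonempty_iff_eq_empty.1 hne, sum_empty]; linarith

/-- Cheeger's inequality for a symmetric weight `W` with degrees `D`: a conductance bound `h`
gives a spectral gap `h ^ 2 / 2`. Here `m` is the `D`-mean of `f`. -/
lemma cheeger {V : Type} [Fintype V] (W : V → V → ℝ) (D : V → ℝ) (h : ℝ)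
    (hW : ∀ u v, 0 ≤ W u v) (hsymm : ∀ u v, W u v = W v u) (hWD : ∀ u, D u = ∑ v, W u v)
    (hh : 0 ≤ h)
    (hcut : ∀ S : Finset V, ∑ u ∈ S, D u ≤ (∑ u, D u) / 2 →
      ∑ u ∈ S, ∑ v ∈ S, W u v ≤ (1 - h) * ∑ u ∈ S, D u)
    (f : V → ℝ) (m : ℝ) (hm : ∑ u, D u * (f u - m) = 0) :
    ∑ u, ∑ v, W u v * (f u * f v) ≤
      ∑ u, D u * f u ^ 2 - h ^ 2 / 2 * ∑ u, D u * (f u - m) ^ 2 := by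
  rcases isEmpty_or_nonempty V with hV | hV
  · simp
  have hD : ∀ u, 0 ≤ D u := fun u => by rw [hWD]; exact Finset.sum_nonneg fun v _ => hW u v
  obtain ⟨c, hc | hc⟩ := exists_median D f
  swap
  · exact absurd hc (not_lt.2 (Finset.sum_nonneg fun u _ => hD u))
  have hp := cheeger_half W D h hW hsymm hWD hh hcut (fun u => max (f u - c) 0) (by
      convert hc.1 using 3
      simp)
  have hn := cheeger_half W D h hW hsymm hWD hh hcut (fun u => max (c - f u) 0) (by
      convert hc.2 using 3
      simp)
  have hsum : h ^ 2 * ∑ u, D u * (f u - c) ^ 2 ≤ ∑ u, ∑ v, W u v * (f u - f v) ^ 2 := by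
    have e1 : ∑ u, D u * (f u - c) ^ 2 =
        ∑ u, D u * (max (f u - c) 0) ^ 2 + ∑ u, D u * (max (c - f u) 0) ^ 2 := by
      rw [← Finset.sum_add_distrib]
      refine Finset.sum_congr rfl fun u _ => ?_
      rcases le_total (f u) c with h | h
      · rw [max_eq_right (by linarith), max_eq_left (by linarith)]; ring
      · rw [max_eq_left (by linarith), max_eq_right (by linarith)]; ring
    have e2 : ∑ u, ∑ v, W u v * (max (f u - c) 0 - max (f v - c) 0) ^ 2 +
        ∑ u, ∑ v, W u v * (max (c - f u) 0 - max (c - f v) 0) ^ 2 ≤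
        ∑ u, ∑ v, W u v * (f u - f v) ^ 2 := by
      simp only [← Finset.sum_add_distrib]
      refine Finset.sum_le_sum fun u _ => Finset.sum_le_sum fun v _ => ?_
      rw [← mul_add]
      refine mul_le_mul_of_nonneg_left ?_ (hW u v)
      rcases le_total (f u) c with h | h <;> rcases le_total (f v) c with h' | h'
      · rw [max_eq_right (by linarith), max_eq_right (by linarith), max_eq_left (by linarith),
          max_eq_left (by linarith)]; nlinarith
      · rw [max_eq_right (by linarith), max_eq_left (by linarith), max_eq_left (by linarith),
          max_eq_right (by linarith)]; nlinarith
      · rw [max_eq_left (by linarith), max_eq_right (by linarith), max_eq_right (by linarith),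
          max_eq_left (by linarith)]; nlinarith
      · rw [max_eq_left (by linarith), max_eq_left (by linarith), max_eq_right (by linarith),
          max_eq_right (by linarith)]; nlinarith
    rw [e1, mul_add]; linarith
  -- the mean minimizes the second moment, so the median may be replaced by it
  have hmean : ∑ u, D u * (f u - m) ^ 2 ≤ ∑ u, D u * (f u - c) ^ 2 := by
    have e : ∑ u, D u * (f u - c) ^ 2 = ∑ u, D u * (f u - m) ^ 2 +
        2 * (m - c) * ∑ u, D u * (f u - m) + ∑ u, D u * (m - c) ^ 2 := by
      simp only [Finset.mul_sum, ← Finset.sum_add_distrib]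
      exact Finset.sum_congr rfl fun u _ => by ring
    have : 0 ≤ ∑ u, D u * (m - c) ^ 2 :=
      Finset.sum_nonneg fun u _ => mul_nonneg (hD u) (sq_nonneg _)
    rw [e, hm]; linarith
  have hexp : ∑ u, ∑ v, W u v * (f u - f v) ^ 2 =
      2 * ∑ u, D u * f u ^ 2 - 2 * ∑ u, ∑ v, W u v * (f u * f v) := by
    have a1 : ∑ u, ∑ v, W u v * f u ^ 2 = ∑ u, D u * f u ^ 2 := by
      simp_rw [hWD, Finset.sum_mul]
    have a2 : ∑ u, ∑ v, W u v * f v ^ 2 = ∑ u, D u * f u ^ 2 := by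
      rw [← a1, Finset.sum_comm]
      exact Finset.sum_congr rfl fun u _ => Finset.sum_congr rfl fun v _ => by rw [hsymm]
    have : ∑ u, ∑ v, W u v * (f u - f v) ^ 2 = ∑ u, ∑ v, W u v * f u ^ 2 +
        ∑ u, ∑ v, W u v * f v ^ 2 - 2 * ∑ u, ∑ v, W u v * (f u * f v) := by
      simp only [Finset.mul_sum, ← Finset.sum_add_distrib, ← Finset.sum_sub_distrib]
      exact Finset.sum_congr rfl fun u _ => Finset.sum_congr rfl fun v _ => by ring
    rw [this, a1, a2]; ring
  have := mul_le_mul_of_nonneg_left hmean (sq_nonneg h)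
  linarith

/-! ### Functions on the faces of a complex, and links -/

section Complex

variable {V : Type} [DecidableEq V] [Fintype V] {d : ℕ}

/-- Double counting of flags `τ ⊂ τ ∪ {u}` of consecutive dimensions. -/
lemma sum_flag (F : Finset V → V → ℝ) (k : ℕ) :
    ∑ τ ∈ powersetCard k univ, ∑ u ∈ τᶜ, F τ u =
      ∑ σ ∈ powersetCard (k + 1) univ, ∑ u ∈ σ, F (σ.erase u) u := by
  rw [Finset.sum_sigma', Finset.sum_sigma']
  refine Finset.sum_bij' (fun p _ => ⟨insert p.2 p.1, p.2⟩) (fun p _ => ⟨p.1.erase p.2, p.2⟩)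
    ?_ ?_ ?_ ?_ ?_
  · rintro ⟨τ, u⟩ h
    simp only [mem_sigma, mem_powersetCard_univ, mem_compl] at h
    simp [card_insert_of_notMem h.2, h.1]
  · rintro ⟨σ, u⟩ h
    simp only [mem_sigma, mem_powersetCard_univ] at h
    simp [card_erase_of_mem h.2, h.1]
  · rintro ⟨τ, u⟩ h
    simp only [mem_sigma, mem_powersetCard_univ, mem_compl] at h
    simp [erase_insert h.2]
  · rintro ⟨σ, u⟩ h
    simp only [mem_sigma, mem_powersetCard_univ] at h
    simp [insert_erase h.2]
  · rintro ⟨τ, u⟩ h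
    simp only [mem_sigma, mem_powersetCard_univ, mem_compl] at h
    simp [erase_insert h.2]

lemma deg_pos (X : SC V d) {σ : Finset V} (h : σ ∈ X.faces) : 0 < X.deg σ := by
  obtain ⟨τ, hτ, hs, hc⟩ := X.pure σ h
  exact Finset.card_pos.2 ⟨τ, by simp [SC.fc, hτ, hs, hc]⟩

lemma mem_of_deg_ne_zero (X : SC V d) {σ : Finset V} (h : X.deg σ ≠ 0) : σ ∈ X.faces := by
  obtain ⟨τ, hτ⟩ := Finset.card_pos.1 (Nat.pos_of_ne_zero h)
  simp only [SC.fc, mem_filter] at hτ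
  exact X.down_closed τ hτ.1.1 σ hτ.2

lemma deg_mono (X : SC V d) {σ τ : Finset V} (h : σ ⊆ τ) : X.deg τ ≤ X.deg σ :=
  Finset.card_le_card fun ρ hρ => by
    simp only [mem_filter] at hρ ⊢
    exact ⟨hρ.1, h.trans hρ.2⟩

lemma sum_deg_insert (X : SC V d) (σ : Finset V) :
    ∑ u ∈ σᶜ, (X.deg (insert u σ) : ℝ) = ((d : ℝ) + 1 - σ.card) * X.deg σ := by
  have h1 : ∑ u ∈ σᶜ, (X.deg (insert u σ) : ℝ) =
      ∑ u ∈ σᶜ, ∑ ρ ∈ (X.fc (d + 1)).filter (fun ρ => insert u σ ⊆ ρ), (1 : ℝ) := by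
    simp [SC.deg]
  have h2 : ∑ u ∈ σᶜ, ∑ ρ ∈ (X.fc (d + 1)).filter (fun ρ => insert u σ ⊆ ρ), (1 : ℝ) =
      ∑ ρ ∈ (X.fc (d + 1)).filter (fun ρ => σ ⊆ ρ), ∑ u ∈ ρ \ σ, (1 : ℝ) := by
    refine Finset.sum_comm' fun u ρ => ?_
    simp only [mem_compl, mem_filter, mem_sdiff, insert_subset_iff]
    tauto
  rw [h1, h2]
  have h3 : ∀ ρ ∈ (X.fc (d + 1)).filter (fun ρ => σ ⊆ ρ),
      ∑ u ∈ ρ \ σ, (1 : ℝ) = (d : ℝ) + 1 - σ.card := by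
    intro ρ hρ
    simp only [SC.fc, mem_filter] at hρ
    rw [Finset.sum_const, nsmul_eq_mul, mul_one, Finset.cast_card_sdiff hρ.2, hρ.1.2]
    push_cast; ring
  rw [Finset.sum_congr rfl h3, Finset.sum_const, nsmul_eq_mul, mul_comm]
  rfl

/-- The squared norm of a function on the faces of cardinality `k`, weighted by degree. Since
`deg` vanishes off `X`, sums may run over all sets of cardinality `k`. -/
noncomputable def nrm (X : SC V d) (k : ℕ) (f : Finset V → ℝ) : ℝ :=
  ∑ σ ∈ powersetCard k univ, (X.deg σ : ℝ) * f σ ^ 2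

/-- The (unnormalized) up operator: the sum of `f` over the facets of `σ`. -/
def upSum (f : Finset V → ℝ) (σ : Finset V) : ℝ := ∑ u ∈ σ, f (σ.erase u)

/-- The down operator: the mean of `f` over the faces covering `τ`, weighted by degree. When
`deg τ = 0` the division returns `0`, which is harmless as every weight involved vanishes. -/
noncomputable def downMean (X : SC V d) (f : Finset V → ℝ) (τ : Finset V) : ℝ :=
  (∑ u ∈ τᶜ, (X.deg (insert u τ) : ℝ) * f (insert u τ)) / (((d : ℝ) + 1 - τ.card) * X.deg τ)

lemma nrm_nonneg (X : SC V d) (k : ℕ) (f : Finset V → ℝ) : 0 ≤ nrm X k f :=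
  Finset.sum_nonneg fun _ _ => mul_nonneg (Nat.cast_nonneg _) (sq_nonneg _)

lemma downMean_spec (X : SC V d) (f : Finset V → ℝ) (τ : Finset V) (hτ : τ.card ≤ d) :
    ∑ u ∈ τᶜ, (X.deg (insert u τ) : ℝ) * f (insert u τ) =
      ((d : ℝ) + 1 - τ.card) * X.deg τ * downMean X f τ := by
  have hc : (0 : ℝ) < (d : ℝ) + 1 - τ.card := by
    have : (τ.card : ℝ) ≤ d := by exact_mod_cast hτ
    linarith
  by_cases h : X.deg τ = 0
  · have : ∀ u ∈ τᶜ, (X.deg (insert u τ) : ℝ) * f (insert u τ) = 0 := fun u _ => by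
      have := deg_mono X (subset_insert u τ)
      rw [h, Nat.le_zero] at this
      simp [this]
    rw [Finset.sum_eq_zero this, h]; simp
  · have h' : (X.deg τ : ℝ) ≠ 0 := by exact_mod_cast h
    rw [downMean, mul_div_cancel₀]
    exact mul_ne_zero hc.ne' h'

/-- The Rayleigh form of the non-lazy walk on faces of cardinality `k`, as the form of the
up-down walk minus its holding part. -/
lemma up_form (X : SC V d) (k : ℕ) (f : Finset V → ℝ) :
    ∑ σ ∈ powersetCard k univ, ∑ v ∈ σᶜ, ∑ u ∈ σ,
      (X.deg (insert v σ) : ℝ) * (f σ * f ((insert v σ).erase u)) =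
    nrm X (k + 1) (upSum f) - ((d : ℝ) + 1 - k) * nrm X k f := by
  have h1 : ∀ σ ∈ powersetCard k (univ : Finset V),
      ∑ v ∈ σᶜ, ∑ u ∈ σ, (X.deg (insert v σ) : ℝ) * (f σ * f ((insert v σ).erase u)) =
      ∑ v ∈ σᶜ, (X.deg (insert v σ) : ℝ) * (f ((insert v σ).erase v) * upSum f (insert v σ)) -
        ((d : ℝ) + 1 - k) * (X.deg σ * f σ ^ 2) := by
    intro σ hσ
    rw [mem_powersetCard_univ] at hσ
    rw [← mul_assoc, ← hσ, ← sum_deg_insert, Finset.sum_mul, ← Finset.sum_sub_distrib]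
    refine Finset.sum_congr rfl fun v hv => ?_
    rw [mem_compl] at hv
    rw [upSum, Finset.sum_insert hv, erase_insert hv, ← Finset.mul_sum, ← Finset.mul_sum]
    ring
  rw [Finset.sum_congr rfl h1, Finset.sum_sub_distrib, ← Finset.mul_sum]
  congr 1
  have := sum_flag (fun σ v => (X.deg (insert v σ) : ℝ) *
    (f ((insert v σ).erase v) * upSum f (insert v σ))) k
  rw [this, nrm]
  refine Finset.sum_congr rfl fun ρ _ => ?_
  have : ∀ v ∈ ρ, (X.deg (insert v (ρ.erase v)) : ℝ) *
      (f ((insert v (ρ.erase v)).erase v) * upSum f (insert v (ρ.erase v))) =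
      X.deg ρ * upSum f ρ * f (ρ.erase v) := fun v hv => by
    rw [insert_erase hv]; ring
  rw [Finset.sum_congr rfl this, ← Finset.mul_sum]
  change _ * upSum f ρ = _
  ring

/-- Garland-style localization: the form of the non-lazy walk is the sum over `τ` of the
adjacency forms of the links. -/
lemma link_form (X : SC V d) (k : ℕ) (f : Finset V → ℝ) :
    ∑ τ ∈ powersetCard k univ, ∑ u ∈ τᶜ, ∑ v ∈ (insert u τ)ᶜ,
      (X.deg (insert v (insert u τ)) : ℝ) * (f (insert u τ) * f (insert v τ)) =
    nrm X (k + 2) (upSum f) - ((d : ℝ) - k) * nrm X (k + 1) f := by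
  have := sum_flag (fun τ u => ∑ v ∈ (insert u τ)ᶜ,
      (X.deg (insert v (insert u τ)) : ℝ) * (f (insert u τ) * f (insert v τ))) k
  rw [this]
  have h := up_form X (k + 1) f
  push_cast at h
  rw [show (d : ℝ) - k = d + 1 - (k + 1) by ring, ← h]
  refine Finset.sum_congr rfl fun σ _ => ?_
  rw [Finset.sum_comm (s := σᶜ)]
  refine Finset.sum_congr rfl fun u hu => ?_
  simp only [insert_erase hu]
  refine Finset.sum_congr rfl fun v hv => ?_
  have : v ≠ u := by rintro rfl; exact (mem_compl.1 hv) hu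
  rw [erase_insert_of_ne this]

lemma sum_cover_sq (X : SC V d) (k : ℕ) (f : Finset V → ℝ) :
    ∑ τ ∈ powersetCard k univ, ∑ u ∈ τᶜ, (X.deg (insert u τ) : ℝ) * f (insert u τ) ^ 2 =
      ((k : ℝ) + 1) * nrm X (k + 1) f := by
  have := sum_flag (fun τ u => (X.deg (insert u τ) : ℝ) * f (insert u τ) ^ 2) k
  rw [this, nrm, Finset.mul_sum]
  refine Finset.sum_congr rfl fun σ hσ => ?_
  rw [mem_powersetCard_univ] at hσ
  rw [Finset.sum_congr rfl fun u hu => by rw [insert_erase hu], Finset.sum_const, hσ,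
    nsmul_eq_mul]
  push_cast; ring

/-- The up and down operators are adjoint, applied to `f` and its own down-mean. -/
lemma down_adjoint (X : SC V d) (k : ℕ) (hk : k ≤ d) (f : Finset V → ℝ) :
    ((d : ℝ) + 1 - k) * nrm X k (downMean X f) =
      ∑ σ ∈ powersetCard (k + 1) univ, (X.deg σ : ℝ) * (f σ * upSum (downMean X f) σ) := by
  have := sum_flag (fun τ u => (X.deg (insert u τ) : ℝ) * (f (insert u τ) * downMean X f τ)) k
  have h2 : ∑ σ ∈ powersetCard (k + 1) univ,
      (X.deg σ : ℝ) * (f σ * upSum (downMean X f) σ) =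
      ∑ σ ∈ powersetCard (k + 1) univ, ∑ u ∈ σ, (X.deg (insert u (σ.erase u)) : ℝ) *
        (f (insert u (σ.erase u)) * downMean X f (σ.erase u)) := by
    refine Finset.sum_congr rfl fun σ _ => ?_
    rw [upSum, Finset.mul_sum, Finset.mul_sum]
    exact Finset.sum_congr rfl fun u hu => by rw [insert_erase hu]
  rw [h2, ← this, nrm, Finset.mul_sum]
  refine Finset.sum_congr rfl fun τ hτ => ?_
  rw [mem_powersetCard_univ] at hτ
  simp_rw [← mul_assoc]
  rw [← Finset.sum_mul, downMean_spec X f τ (hτ ▸ hk), hτ]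
  ring

lemma down_mean_zero (X : SC V d) (k : ℕ) (hk : k ≤ d) (f : Finset V → ℝ)
    (hf : ∑ σ ∈ powersetCard (k + 1) univ, (X.deg σ : ℝ) * f σ = 0) :
    ∑ τ ∈ powersetCard k univ, (X.deg τ : ℝ) * downMean X f τ = 0 := by
  have hc : (0 : ℝ) < (d : ℝ) + 1 - k := by
    have : (k : ℝ) ≤ d := by exact_mod_cast hk
    linarith
  have := sum_flag (fun τ u => (X.deg (insert u τ) : ℝ) * f (insert u τ)) k
  have h1 : ∑ τ ∈ powersetCard k univ, ∑ u ∈ τᶜ, (X.deg (insert u τ) : ℝ) * f (insert u τ) =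
      ((d : ℝ) + 1 - k) * ∑ τ ∈ powersetCard k univ, (X.deg τ : ℝ) * downMean X f τ := by
    rw [Finset.mul_sum]
    refine Finset.sum_congr rfl fun τ hτ => ?_
    rw [mem_powersetCard_univ] at hτ
    rw [downMean_spec X f τ (hτ ▸ hk), hτ]; ring
  have h2 : ∑ σ ∈ powersetCard (k + 1) univ, ∑ u ∈ σ,
      (X.deg (insert u (σ.erase u)) : ℝ) * f (insert u (σ.erase u)) =
      ((k : ℝ) + 1) * ∑ σ ∈ powersetCard (k + 1) univ, (X.deg σ : ℝ) * f σ := by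
    rw [Finset.mul_sum]
    refine Finset.sum_congr rfl fun σ hσ => ?_
    rw [mem_powersetCard_univ] at hσ
    rw [Finset.sum_congr rfl fun u hu => by rw [insert_erase hu], Finset.sum_const, hσ,
      nsmul_eq_mul]
    push_cast; ring
  rw [h1, h2, hf, mul_zero] at this
  exact (mul_eq_zero.1 this).resolve_left hc.ne'

/-- The sets of cardinality `n` that contain `τ` and have all other elements in `S`. -/
def aboveIn (τ S : Finset V) (n : ℕ) : Finset (Finset V) :=
  univ.filter fun ρ => ρ.card = n ∧ τ ⊆ ρ ∧ ρ \ τ ⊆ S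

lemma sum_aboveIn_insert (g : Finset V → ℝ) (τ S : Finset V) (m : ℕ) :
    ∑ u ∈ S \ τ, ∑ ρ ∈ aboveIn (insert u τ) S (τ.card + (m + 1)), g ρ =
      ((m : ℝ) + 1) * ∑ ρ ∈ aboveIn τ S (τ.card + (m + 1)), g ρ := by
  rw [Finset.sum_comm' (t' := aboveIn τ S (τ.card + (m + 1))) (s' := fun ρ => ρ \ τ),
    Finset.mul_sum]
  · refine Finset.sum_congr rfl fun ρ hρ => ?_
    simp only [aboveIn, mem_filter] at hρ
    rw [Finset.sum_const, nsmul_eq_mul, Finset.cast_card_sdiff hρ.2.2.1, hρ.2.1]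
    push_cast; ring
  · intro u ρ
    simp only [aboveIn, mem_filter, mem_univ, true_and, mem_sdiff, insert_subset_iff]
    simp only [Finset.subset_iff, mem_sdiff, mem_insert]
    constructor
    · rintro ⟨⟨hS, hu⟩, hc, ⟨hu', hτ⟩, hr⟩
      refine ⟨⟨hu', hu⟩, hc, hτ, fun x hx => ?_⟩
      by_cases hxu : x = u
      · exact hxu ▸ hS
      · exact hr ⟨hx.1, by tauto⟩
    · rintro ⟨⟨hu', hu⟩, hc, hτ, hr⟩
      exact ⟨⟨hr ⟨hu', hu⟩, hu⟩, hc, ⟨hu', hτ⟩, fun x hx => hr ⟨hx.1, by tauto⟩⟩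

lemma aboveIn_self (τ S : Finset V) : aboveIn τ S τ.card = {τ} := by
  ext ρ
  simp only [aboveIn, mem_filter, mem_univ, true_and, mem_singleton]
  constructor
  · rintro ⟨hc, hs, -⟩
    exact (Finset.eq_of_subset_of_card_le hs hc.le).symm
  · rintro rfl
    simp

lemma sum_aboveIn_one (g : Finset V → ℝ) (τ S : Finset V) :
    ∑ ρ ∈ aboveIn τ S (τ.card + 1), g ρ = ∑ u ∈ S \ τ, g (insert u τ) := by
  have h := sum_aboveIn_insert g τ S 0
  simp only [Nat.cast_zero, zero_add, one_mul] at h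
  rw [← h]
  refine Finset.sum_congr rfl fun u hu => ?_
  rw [← card_insert_of_notMem (mem_sdiff.1 hu).2, aboveIn_self, Finset.sum_singleton]

lemma sum_aboveIn_two (g : Finset V → ℝ) (τ S : Finset V) :
    2 * ∑ ρ ∈ aboveIn τ S (τ.card + 2), g ρ =
      ∑ u ∈ S \ τ, ∑ v ∈ S \ insert u τ, g (insert v (insert u τ)) := by
  have h := sum_aboveIn_insert g τ S 1
  norm_num at h
  rw [← h]
  refine Finset.sum_congr rfl fun u hu => ?_
  rw [← sum_aboveIn_one, card_insert_of_notMem (mem_sdiff.1 hu).2]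

lemma linkSubsetNorm_eq (X : SC V d) (τ S : Finset V) (m : ℕ) :
    X.linkSubsetNorm τ m S = (∑ ρ ∈ aboveIn τ S (τ.card + m), (X.deg ρ : ℝ)) /
      ∑ ρ ∈ aboveIn τ univ (τ.card + m), (X.deg ρ : ℝ) := by
  have hface : ∀ ρ, X.deg ρ ≠ 0 → ρ ∈ X.faces := fun ρ => mem_of_deg_ne_zero X
  unfold SC.linkSubsetNorm
  congr 1
  · refine Finset.sum_subset (fun ρ h => ?_) fun ρ h h' => ?_
    · simp only [SC.fc, aboveIn, mem_filter, mem_univ, true_and] at h ⊢; tauto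
    · simp only [SC.fc, aboveIn, mem_filter, mem_univ, true_and] at h h'
      have := hface ρ
      by_contra h0
      exact h' ⟨⟨this (by exact_mod_cast h0), h.1⟩, h.2⟩
  · refine Finset.sum_subset (fun ρ h => ?_) fun ρ h h' => ?_
    · simp only [SC.fc, aboveIn, mem_filter, mem_univ, true_and, subset_univ, and_true] at h ⊢; tauto
    · simp only [SC.fc, aboveIn, mem_filter, mem_univ, true_and, subset_univ, and_true] at h h'
      have := hface ρ
      by_contra h0
      exact h' ⟨⟨this (by exact_mod_cast h0), h.1⟩, h.2⟩

/-- The edge weights of the 1-skeleton of the link of `τ`. -/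
noncomputable def linkW (X : SC V d) (τ : Finset V) (u v : V) : ℝ :=
  if u ∉ τ ∧ v ∉ τ ∧ u ≠ v then (X.deg (insert v (insert u τ)) : ℝ) else 0

/-- The vertex degrees for the weights `linkW`. -/
noncomputable def linkD (X : SC V d) (τ : Finset V) (u : V) : ℝ :=
  if u ∉ τ then ((d : ℝ) - τ.card) * X.deg (insert u τ) else 0

lemma sum_linkW (X : SC V d) (τ S : Finset V) (g : V → V → ℝ) :
    ∑ u ∈ S, ∑ v ∈ S, linkW X τ u v * g u v =
      ∑ u ∈ S \ τ, ∑ v ∈ S \ insert u τ, (X.deg (insert v (insert u τ)) : ℝ) * g u v := by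
  rw [Finset.sdiff_eq_filter, Finset.sum_filter]
  refine Finset.sum_congr rfl fun u _ => ?_
  by_cases hu : u ∈ τ
  · rw [if_neg (not_not.2 hu)]
    exact Finset.sum_eq_zero fun v _ => by rw [linkW, if_neg (by tauto), zero_mul]
  · rw [if_pos hu, Finset.sdiff_eq_filter, Finset.sum_filter]
    refine Finset.sum_congr rfl fun v _ => ?_
    by_cases hv : v ∈ insert u τ
    · have : ¬ (u ∉ τ ∧ v ∉ τ ∧ u ≠ v) := by
        rintro ⟨-, h1, h2⟩
        rcases mem_insert.1 hv with h | h
        · exact h2 h.symm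
        · exact h1 h
      rw [linkW, if_neg this, if_neg (not_not.2 hv), zero_mul]
    · have h := hv
      rw [mem_insert, not_or] at h
      rw [linkW, if_pos ⟨hu, h.2, Ne.symm h.1⟩, if_pos hv]

lemma sum_linkD (X : SC V d) (τ S : Finset V) (g : V → ℝ) :
    ∑ u ∈ S, linkD X τ u * g u =
      ((d : ℝ) - τ.card) * ∑ u ∈ S \ τ, (X.deg (insert u τ) : ℝ) * g u := by
  rw [Finset.sdiff_eq_filter, Finset.sum_filter, Finset.mul_sum]
  refine Finset.sum_congr rfl fun u _ => ?_
  by_cases hu : u ∈ τ <;> simp [linkD, hu, mul_assoc]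

lemma linkW_nonneg (X : SC V d) (τ : Finset V) (u v : V) : 0 ≤ linkW X τ u v := by
  unfold linkW; split_ifs <;> positivity

lemma linkD_eq (X : SC V d) (τ : Finset V) (u : V) : linkD X τ u = ∑ v, linkW X τ u v := by
  by_cases hu : u ∈ τ
  · simp [linkD, linkW, hu]
  · have h := sum_deg_insert X (insert u τ)
    rw [card_insert_of_notMem hu] at h
    push_cast at h
    rw [linkD, if_pos hu, show (d : ℝ) - τ.card = d + 1 - (τ.card + 1) by ring, ← h,
      ← Finset.sum_ite_mem_eq]
    refine Finset.sum_congr rfl fun v _ => ?_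
    by_cases hv : v ∈ insert u τ
    · rw [if_neg (by rwa [mem_compl, not_not]), linkW, if_neg]
      rintro ⟨-, h1, h2⟩
      rcases mem_insert.1 hv with h | h
      · exact h2 h.symm
      · exact h1 h
    · have h := hv
      rw [mem_insert, not_or] at h
      rw [if_pos (by rwa [mem_compl]), linkW, if_pos ⟨hu, h.2, Ne.symm h.1⟩]

/-- Skeleton expansion is a conductance bound `1 / 2 - α` for the link. -/
lemma link_cut (X : SC V d) {α : ℝ} (hX : X.IsSkeletonExpander α) (τ : Finset V)
    (S : Finset V)
    (hS : ∑ u ∈ S, linkD X τ u ≤ (∑ u, linkD X τ u) / 2) :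
    ∑ u ∈ S, ∑ v ∈ S, linkW X τ u v ≤ (1 - (1 / 2 - α)) * ∑ u ∈ S, linkD X τ u := by
  have hD0 : ∀ u, 0 ≤ linkD X τ u := fun u => by
    rw [linkD_eq]; exact Finset.sum_nonneg fun v _ => linkW_nonneg X τ u v
  have hWS : ∀ S : Finset V, ∑ u ∈ S, ∑ v ∈ S, linkW X τ u v =
      2 * ∑ ρ ∈ aboveIn τ S (τ.card + 2), (X.deg ρ : ℝ) := fun S => by
    have := sum_linkW X τ S (fun _ _ => 1)
    simp only [mul_one] at this
    rw [this, sum_aboveIn_two (fun ρ => (X.deg ρ : ℝ))]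
  have hDS : ∀ S : Finset V, ∑ u ∈ S, linkD X τ u =
      ((d : ℝ) - τ.card) * ∑ ρ ∈ aboveIn τ S (τ.card + 1), (X.deg ρ : ℝ) := fun S => by
    have := sum_linkD X τ S (fun _ => 1)
    simp only [mul_one] at this
    rw [this, sum_aboveIn_one (fun ρ => (X.deg ρ : ℝ))]
  have hDW : ∑ u, linkD X τ u = ∑ u, ∑ v, linkW X τ u v :=
    Finset.sum_congr rfl fun u _ => linkD_eq X τ u
  have hle : ∑ u ∈ S, linkD X τ u ≤ ∑ u, linkD X τ u :=
    Finset.sum_le_sum_of_subset_of_nonneg (subset_univ _) fun u _ _ => hD0 u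
  have hS0 : 0 ≤ ∑ u ∈ S, linkD X τ u := Finset.sum_nonneg fun u _ => hD0 u
  have hWle : ∑ u ∈ S, ∑ v ∈ S, linkW X τ u v ≤ ∑ u ∈ S, linkD X τ u := by
    refine Finset.sum_le_sum fun u _ => ?_
    rw [linkD_eq]
    exact Finset.sum_le_sum_of_subset_of_nonneg (subset_univ _) fun v _ _ => linkW_nonneg X τ u v
  set T := ∑ u, linkD X τ u with hT
  rcases (hS0.trans hle).eq_or_lt with h0 | h0
  · have : ∑ u ∈ S, linkD X τ u = 0 := le_antisymm (h0 ▸ hle) hS0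
    rw [this] at hWle ⊢
    simpa using hWle
  · have hpos : (d : ℝ) - τ.card ≠ 0 := by
      intro h
      rw [hT, hDS, h, zero_mul] at h0
      exact lt_irrefl _ h0
    have hface : τ ∈ X.faces := by
      by_contra hτ
      have : X.deg τ = 0 := by
        by_contra h
        exact hτ (mem_of_deg_ne_zero X h)
      have hz : ∀ u, linkD X τ u = 0 := fun u => by
        have h1 := deg_mono X (subset_insert u τ)
        rw [this, Nat.le_zero] at h1
        simp [linkD, h1]
      rw [hT, Finset.sum_eq_zero fun u _ => hz u] at h0
      exact lt_irrefl _ h0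
    have h := hX τ hface S
    -- both norms in the link are ratios of the total weight `T`
    have r2 : X.linkSubsetNorm τ 2 S = (∑ u ∈ S, ∑ v ∈ S, linkW X τ u v) / T := by
      rw [linkSubsetNorm_eq, hDW, hWS, hWS, mul_div_mul_left _ _ two_ne_zero]
    have r1 : X.linkSubsetNorm τ 1 S = (∑ u ∈ S, linkD X τ u) / T := by
      rw [linkSubsetNorm_eq, hT, hDS, hDS univ, mul_div_mul_left _ _ hpos]
    rw [r1, r2, div_mul_eq_mul_div, div_le_div_iff_of_pos_right h0] at h
    refine h.trans ?_
    rw [mul_comm]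
    refine mul_le_mul_of_nonneg_right ?_ hS0
    have : (∑ u ∈ S, linkD X τ u) / T ≤ 1 / 2 := by
      rw [div_le_iff₀ h0]; linarith
    linarith

/-- Local spectral gap, for the function induced by `f` on the vertices of the link of `τ`. -/
lemma link_gap (X : SC V d) {α : ℝ} (hα : α ≤ 1 / 2) (hX : X.IsSkeletonExpander α)
    (τ : Finset V) (hτ : τ.card ≤ d) (f : Finset V → ℝ) :
    ∑ u ∈ τᶜ, ∑ v ∈ (insert u τ)ᶜ,
      (X.deg (insert v (insert u τ)) : ℝ) * (f (insert u τ) * f (insert v τ)) ≤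
    ((d : ℝ) - τ.card) * (∑ u ∈ τᶜ, (X.deg (insert u τ) : ℝ) * f (insert u τ) ^ 2 -
      (1 / 2 - α) ^ 2 / 2 * (∑ u ∈ τᶜ, (X.deg (insert u τ) : ℝ) * f (insert u τ) ^ 2 -
        ((d : ℝ) + 1 - τ.card) * (X.deg τ * downMean X f τ ^ 2))) := by
  have hsp := downMean_spec X f τ hτ
  set m := downMean X f τ with hm
  have h := cheeger (linkW X τ) (linkD X τ) (1 / 2 - α) (linkW_nonneg X τ)
    (fun u v => by
      unfold linkW
      rw [insert_comm]
      exact if_congr (by tauto) rfl rfl)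
    (linkD_eq X τ) (by linarith) (link_cut X hX τ) (fun u => f (insert u τ)) m
    (by
      rw [sum_linkD X τ univ (fun u => f (insert u τ) - m)]
      simp_rw [mul_sub]
      rw [Finset.sum_sub_distrib, ← compl_eq_univ_sdiff, hsp, ← Finset.sum_mul, sum_deg_insert]
      ring)
  rw [sum_linkW X τ univ (fun u v => f (insert u τ) * f (insert v τ)),
    sum_linkD X τ univ (fun u => f (insert u τ) ^ 2),
    sum_linkD X τ univ (fun u => (f (insert u τ) - m) ^ 2)] at h
  simp_rw [← compl_eq_univ_sdiff] at h
  have e : ∑ u ∈ τᶜ, (X.deg (insert u τ) : ℝ) * (f (insert u τ) - m) ^ 2 =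
      ∑ u ∈ τᶜ, (X.deg (insert u τ) : ℝ) * f (insert u τ) ^ 2 -
        ((d : ℝ) + 1 - τ.card) * (X.deg τ * m ^ 2) := by
    have : ∑ u ∈ τᶜ, (X.deg (insert u τ) : ℝ) * (f (insert u τ) - m) ^ 2 =
        ∑ u ∈ τᶜ, (X.deg (insert u τ) : ℝ) * f (insert u τ) ^ 2 -
        2 * m * ∑ u ∈ τᶜ, (X.deg (insert u τ) : ℝ) * f (insert u τ) +
        m ^ 2 * ∑ u ∈ τᶜ, (X.deg (insert u τ) : ℝ) := by
      simp only [Finset.mul_sum, ← Finset.sum_add_distrib, ← Finset.sum_sub_distrib]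
      exact Finset.sum_congr rfl fun u _ => by ring
    rw [this, hsp, sum_deg_insert]
    ring
  rw [e] at h
  linarith

/-- The up operator contracts mean-zero functions: local gaps `g = (1/2 - α)²/2` in all links
multiply up to a gap `g ^ k` for functions on faces of cardinality `k`. -/
lemma up_contract (X : SC V d) {α : ℝ} (hα0 : 0 < α) (hα : α ≤ 1 / 2)
    (hX : X.IsSkeletonExpander α) (k : ℕ) : k ≤ d → ∀ f : Finset V → ℝ,
      ∑ σ ∈ powersetCard k univ, (X.deg σ : ℝ) * f σ = 0 →
      nrm X (k + 1) (upSum f) ≤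
        ((k : ℝ) + 1 - ((1 / 2 - α) ^ 2 / 2) ^ k) * ((d : ℝ) + 1 - k) * nrm X k f := by
  set g := (1 / 2 - α) ^ 2 / 2 with hg
  have hg0 : 0 ≤ g := by positivity
  have hg1 : g ≤ 1 := by rw [hg]; nlinarith
  induction k with
  | zero =>
    intro _ f hf
    have h0 : f ∅ = 0 := by
      have := deg_pos X X.empty_mem
      simp only [powersetCard_zero, sum_singleton, mul_eq_zero, Nat.cast_eq_zero] at hf
      exact hf.resolve_left this.ne'
    have : nrm X (0 + 1) (upSum f) = 0 := by
      refine Finset.sum_eq_zero fun σ hσ => ?_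
      rw [mem_powersetCard_univ, zero_add, card_eq_one] at hσ
      obtain ⟨a, rfl⟩ := hσ
      simp [upSum, h0]
    rw [this]; simp
  | succ k ih =>
    intro hk f hf
    have hkd : ((k : ℝ) + 1) ≤ d := by exact_mod_cast hk
    have ih' := ih (by lia) (downMean X f) (down_mean_zero X k (by lia) f hf)
    have hadj := down_adjoint X k (by lia) f
    set N := nrm X (k + 1) f with hN
    have hN0 : 0 ≤ N := nrm_nonneg X _ _
    set Y := ((d : ℝ) + 1 - k) * nrm X k (downMean X f) with hY
    have hY0 : 0 ≤ Y := mul_nonneg (by linarith) (nrm_nonneg X _ _)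
    have hgk : g ^ k ≤ 1 := pow_le_one₀ hg0 hg1
    have hgk0 : 0 ≤ g ^ k := by positivity
    have hkg : 0 ≤ (k : ℝ) + 1 - g ^ k := by
      have : (0 : ℝ) ≤ k := by positivity
      linarith
    have hCS : Y ^ 2 ≤ N * nrm X (k + 1) (upSum (downMean X f)) := by
      rw [hadj]
      refine Finset.sum_sq_le_sum_mul_sum_of_sq_le_mul _ (fun σ _ => by positivity)
        (fun σ _ => by positivity) fun σ _ => le_of_eq (by ring)
    have hYle : Y ≤ ((k : ℝ) + 1 - g ^ k) * N := by
      rcases hY0.eq_or_lt with h0 | h0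
      · rw [← h0]; positivity
      · have h1 : Y * Y ≤ ((k : ℝ) + 1 - g ^ k) * N * Y := by
          have := mul_le_mul_of_nonneg_left ih' hN0
          rw [mul_assoc] at this
          change _ ≤ N * (_ * Y) at this
          nlinarith
        exact le_of_mul_le_mul_right h1 h0
    -- sum the local inequality over all links
    have hlink : nrm X (k + 2) (upSum f) - ((d : ℝ) - k) * N ≤
        ((d : ℝ) - k) * (((k : ℝ) + 1) * N - g * (((k : ℝ) + 1) * N - Y)) := by
      rw [← link_form, hY, nrm, ← sum_cover_sq X k f]
      simp only [Finset.mul_sum (powersetCard k univ), ← Finset.sum_sub_distrib]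
      refine Finset.sum_le_sum fun τ hτ => ?_
      rw [mem_powersetCard_univ] at hτ
      have := link_gap X hα hX τ (by lia) f
      rwa [hτ] at this
    have hgap : g ^ k * N ≤ ((k : ℝ) + 1) * N - Y := by linarith
    have h2 := mul_le_mul_of_nonneg_left (mul_le_mul_of_nonneg_left hgap hg0)
      (show (0 : ℝ) ≤ d - k by linarith)
    push_cast
    rw [pow_succ]
    change nrm X (k + 2) (upSum f) ≤ _
    linarith

end Complex

/-! ### The quadratic form of the high order walk -/

section Walk

variable {V : Type} [DecidableEq V] [Fintype V] {d : ℕ}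

/-- Two distinct sets of cardinality `k` span a set of cardinality `k + 1` exactly when one is
obtained from the other by exchanging one element. -/
lemma sum_neighbors (F φ : Finset V → ℝ) (k : ℕ) {σ : Finset V} (hσ : σ.card = k) :
    ∑ σ' ∈ powersetCard k univ, (if (σ ∪ σ').card = k + 1 then F (σ ∪ σ') * φ σ' else 0) =
      ∑ v ∈ σᶜ, ∑ u ∈ σ, F (insert v σ) * φ ((insert v σ).erase u) := by
  rw [← Finset.sum_filter, ← Finset.sum_product']
  symm
  refine Finset.sum_bij (fun p _ => (insert p.1 σ).erase p.2) ?_ ?_ ?_ ?_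
  · rintro ⟨v, u⟩ h
    simp only [mem_product, mem_compl] at h
    have e : σ ∪ (insert v σ).erase u = insert v σ := by
      ext x; simp only [mem_union, mem_erase, mem_insert]
      have : x = u → x ∈ σ := by rintro rfl; exact h.2
      tauto
    simp only [mem_filter, mem_powersetCard_univ, e, card_insert_of_notMem h.1, hσ, and_true]
    rw [card_erase_of_mem (mem_insert_of_mem h.2), card_insert_of_notMem h.1, hσ]; rfl
  · rintro ⟨v, u⟩ h ⟨v', u'⟩ h' he
    simp only [mem_product, mem_compl] at h h' he
    have hne : v ≠ u := by rintro rfl; exact h.1 h.2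
    have hne' : v' ≠ u' := by rintro rfl; exact h'.1 h'.2
    have hv : v ∈ (insert v' σ).erase u' := by rw [← he]; simp [hne]
    have hu : u ∉ (insert v' σ).erase u' := by rw [← he]; simp
    simp only [mem_erase, mem_insert] at hv hu
    have h1 : v = v' := by tauto
    have h2 : u = u' := by
      by_contra hh; exact hu ⟨hh, Or.inr h.2⟩
    rw [h1, h2]
  · intro σ' h
    simp only [mem_filter, mem_powersetCard_univ] at h
    have c1 := card_union_add_card_inter σ σ'
    have c2 := card_sdiff_add_card_inter σ σ'
    have c3 := card_sdiff_add_card_inter σ' σ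
    rw [inter_comm] at c3
    obtain ⟨u, hu⟩ := card_eq_one.1 (show (σ \ σ').card = 1 by lia)
    obtain ⟨v, hv⟩ := card_eq_one.1 (show (σ' \ σ).card = 1 by lia)
    simp only [Finset.ext_iff, mem_sdiff, mem_singleton] at hu hv
    have hu' := (hu u).2 rfl
    have hv' := (hv v).2 rfl
    refine ⟨⟨v, u⟩, ?_, ?_⟩
    · simp [hu', hv']
    · ext x
      have := hu x
      have := hv x
      simp only [mem_erase, mem_insert]
      grind
  · rintro ⟨v, u⟩ h
    simp only [mem_product, mem_compl] at h
    have e : σ ∪ (insert v σ).erase u = insert v σ := by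
      ext x; simp only [mem_union, mem_erase, mem_insert]
      have : x = u → x ∈ σ := by rintro rfl; exact h.2
      tauto
    simp only [e]

/-- The extension by zero of a function on the faces of cardinality `k`. -/
def extend0 (X : SC V d) (k : ℕ) (f : {σ // σ ∈ X.fc k} → ℝ) (σ : Finset V) : ℝ :=
  if h : σ ∈ X.fc k then f ⟨σ, h⟩ else 0

lemma extend0_coe (X : SC V d) (k : ℕ) (f : {σ // σ ∈ X.fc k} → ℝ) (σ : {σ // σ ∈ X.fc k}) :
    extend0 X k f σ = f σ := by simp [extend0]

/-- Terms that vanish off the complex may be summed over all sets of cardinality `k`. -/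
lemma sum_faces (X : SC V d) (k : ℕ) (G : Finset V → ℝ)
    (hG : ∀ σ, X.deg σ = 0 → G σ = 0) :
    ∑ σ : {σ // σ ∈ X.fc k}, G σ = ∑ σ ∈ powersetCard k univ, G σ := by
  rw [Finset.sum_coe_sort (X.fc k) G]
  refine Finset.sum_subset (fun σ h => ?_) fun σ h h' => hG σ ?_
  · simp only [SC.fc, mem_filter] at h
    simpa using h.2
  · by_contra h0
    rw [mem_powersetCard_univ] at h
    exact h' (by simpa [SC.fc, h] using mem_of_deg_ne_zero X h0)

lemma adjG_cast (X : SC V d) (i : ℕ) (σ σ' : {σ // σ ∈ X.fc (i + 1)}) :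
    (X.adjG i σ σ' : ℝ) =
      if (σ.1 ∪ σ'.1).card = i + 1 + 1 then (X.deg (σ.1 ∪ σ'.1) : ℝ) else 0 := by
  unfold SC.adjG
  by_cases hc : (σ.1 ∪ σ'.1).card = i + 1 + 1
  · by_cases h0 : X.deg (σ.1 ∪ σ'.1) = 0
    · simp [h0]
    · rw [if_pos hc, if_pos]
      simpa [SC.fc, hc] using mem_of_deg_ne_zero X h0
  · rw [if_neg hc, if_neg]
    · simp
    · simp only [SC.fc, mem_filter, not_and]
      exact fun _ => hc

lemma adjG_symm (X : SC V d) (i : ℕ) (σ σ' : {σ // σ ∈ X.fc (i + 1)}) :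
    X.adjG i σ σ' = X.adjG i σ' σ := by
  unfold SC.adjG
  rw [union_comm]

lemma sum_adjG (X : SC V d) (i : ℕ) (φ : Finset V → ℝ) (σ : {σ // σ ∈ X.fc (i + 1)}) :
    ∑ σ', (X.adjG i σ σ' : ℝ) * φ σ' =
      ∑ v ∈ σ.1ᶜ, ∑ u ∈ σ.1, (X.deg (insert v σ.1) : ℝ) * φ ((insert v σ.1).erase u) := by
  have hσ : σ.1.card = i + 1 := by
    have := σ.2
    simp only [SC.fc, mem_filter] at this
    exact this.2
  rw [← sum_neighbors (fun ρ => (X.deg ρ : ℝ)) φ (i + 1) hσ, ← sum_faces X (i + 1)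
    (fun σ' => if (σ.1 ∪ σ').card = i + 1 + 1 then (X.deg (σ.1 ∪ σ') : ℝ) * φ σ' else 0)]
  · refine Finset.sum_congr rfl fun σ' _ => ?_
    rw [adjG_cast]
    split_ifs <;> simp
  · intro σ' h
    have := deg_mono X (subset_union_right : σ' ⊆ σ.1 ∪ σ')
    rw [h, Nat.le_zero] at this
    simp [this]

lemma mdeg_adjG (X : SC V d) (i : ℕ) (σ : {σ // σ ∈ X.fc (i + 1)}) :
    (mdeg (X.adjG i) σ : ℝ) = ((i : ℝ) + 1) * (((d : ℝ) - i) * X.deg σ.1) := by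
  have hσ : σ.1.card = i + 1 := by
    have := σ.2
    simp only [SC.fc, mem_filter] at this
    exact this.2
  have h := sum_adjG X i (fun _ => 1) σ
  simp only [mul_one, Finset.sum_const, nsmul_eq_mul, hσ] at h
  rw [mdeg, Nat.cast_sum, h, ← Finset.mul_sum, sum_deg_insert, hσ]
  push_cast; ring

lemma mdeg_adjG_pos (X : SC V d) {i : ℕ} (hi : i < d) (σ : {σ // σ ∈ X.fc (i + 1)}) :
    0 < mdeg (X.adjG i) σ := by
  have h1 : (0 : ℝ) < X.deg σ.1 := by
    have := σ.2
    simp only [SC.fc, mem_filter] at this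
    exact_mod_cast deg_pos X this.1
  have h2 : (0 : ℝ) < d - i := sub_pos.2 (by exact_mod_cast hi)
  have : (0 : ℝ) < mdeg (X.adjG i) σ := by rw [mdeg_adjG]; positivity
  exact_mod_cast this

/-- Two-sided bound on the form of the walk: the upper bound is the spectral gap, the lower one
is positivity of the up-down walk. -/
lemma adjG_form (X : SC V d) {α : ℝ} (hα0 : 0 < α) (hα : α ≤ 1 / 2)
    (hX : X.IsSkeletonExpander α) {i : ℕ} (hi : i < d) (f : {σ // σ ∈ X.fc (i + 1)} → ℝ)
    (hf : ∑ σ, (mdeg (X.adjG i) σ : ℝ) * f σ = 0) :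
    ((i : ℝ) + 1) * ∑ σ, ∑ σ', (X.adjG i σ σ' : ℝ) * (f σ * f σ') ≤
        ((i : ℝ) + 1 - ((1 / 2 - α) ^ 2 / 2) ^ (i + 1)) *
          ∑ σ, (mdeg (X.adjG i) σ : ℝ) * f σ ^ 2 ∧
      -∑ σ, (mdeg (X.adjG i) σ : ℝ) * f σ ^ 2 ≤
        ((i : ℝ) + 1) * ∑ σ, ∑ σ', (X.adjG i σ σ' : ℝ) * (f σ * f σ') := by
  have hi0 : (0 : ℝ) < (i : ℝ) + 1 := by positivity
  have hdi : (0 : ℝ) < d - i := sub_pos.2 (by exact_mod_cast hi)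
  obtain ⟨φ, hφ⟩ : ∃ φ : Finset V → ℝ, ∀ σ : {σ // σ ∈ X.fc (i + 1)}, f σ = φ σ :=
    ⟨extend0 X (i + 1) f, fun σ => (extend0_coe X _ f σ).symm⟩
  simp only [hφ] at hf ⊢
  have hS : ∑ σ, (mdeg (X.adjG i) σ : ℝ) * φ σ ^ 2 =
      ((i : ℝ) + 1) * (((d : ℝ) - i) * nrm X (i + 1) φ) := by
    rw [nrm, ← sum_faces X (i + 1) (fun σ => (X.deg σ : ℝ) * φ σ ^ 2)
      (fun σ h => by simp [h]), Finset.mul_sum, Finset.mul_sum]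
    exact Finset.sum_congr rfl fun σ _ => by rw [mdeg_adjG]; ring
  have hM : ∑ σ ∈ powersetCard (i + 1) univ, (X.deg σ : ℝ) * φ σ = 0 := by
    have : ∑ σ, (mdeg (X.adjG i) σ : ℝ) * φ σ = (((i : ℝ) + 1) * ((d : ℝ) - i)) *
        ∑ σ ∈ powersetCard (i + 1) univ, (X.deg σ : ℝ) * φ σ := by
      rw [← sum_faces X (i + 1) (fun σ => (X.deg σ : ℝ) * φ σ)
        (fun σ h => by simp [h]), Finset.mul_sum]
      exact Finset.sum_congr rfl fun σ _ => by rw [mdeg_adjG]; ring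
    rw [this] at hf
    exact (mul_eq_zero.1 hf).resolve_left (by positivity)
  have hA : ∑ σ, ∑ σ', (X.adjG i σ σ' : ℝ) * (φ σ * φ σ') =
      nrm X (i + 1 + 1) (upSum φ) - ((d : ℝ) - i) * nrm X (i + 1) φ := by
    have h := up_form X (i + 1) φ
    push_cast at h
    rw [show (d : ℝ) + 1 - (i + 1) = d - i by ring] at h
    rw [← h, ← sum_faces X (i + 1)]
    · refine Finset.sum_congr rfl fun σ _ => ?_
      rw [← sum_adjG X i (fun σ' => φ σ * φ σ') σ]
    · intro σ h0
      refine Finset.sum_eq_zero fun v _ => Finset.sum_eq_zero fun u _ => ?_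
      have := deg_mono X (subset_insert v σ)
      rw [h0, Nat.le_zero] at this
      simp [this]
  have hc := up_contract X hα0 hα hX (i + 1) hi φ hM
  have hU := nrm_nonneg X (i + 1 + 1) (upSum φ)
  push_cast at hc
  rw [show (d : ℝ) + 1 - (i + 1) = d - i by ring] at hc
  rw [hS, hA]
  constructor
  · have := mul_le_mul_of_nonneg_left hc hi0.le
    linarith
  · have := mul_nonneg hi0.le hU
    linarith

/-- The constants: the rate in the theorem is weaker than the spectral gap. -/
lemma numerics {d : ℕ} (hd : 1 < d) {α : ℝ} (hα0 : 0 < α)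
    (hα : α < ((2 : ℝ) ^ ((1 : ℝ) / 2 ^ d) - 1) / Real.sqrt 2) :
    α ≤ 1 / 2 ∧ ∀ i : ℕ, i < d →
      1 / (2 * ((d : ℝ) + 1) ^ 2) *
          (((2 : ℝ) ^ ((1 : ℝ) / 2 ^ d) - 1 - Real.sqrt 2 * α) /
              (2 * Real.sqrt 2 * (d : ℝ))) ^ (2 * d) ≤ 1 / 2 ∧
      2 * ((i : ℝ) + 1) * (1 / (2 * ((d : ℝ) + 1) ^ 2) *
          (((2 : ℝ) ^ ((1 : ℝ) / 2 ^ d) - 1 - Real.sqrt 2 * α) /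
              (2 * Real.sqrt 2 * (d : ℝ))) ^ (2 * d)) ≤
        ((1 / 2 - α) ^ 2 / 2) ^ (i + 1) := by
  have hN : (2 : ℝ) ^ ((1 : ℝ) / 2 ^ d) ≤ 5 / 4 := by
    have h4 : (2 : ℝ) ≤ (5 / 4 : ℝ) ^ (2 ^ d) :=
      calc (2 : ℝ) ≤ (5 / 4 : ℝ) ^ (2 ^ 2) := by norm_num
        _ ≤ _ := pow_le_pow_right₀ (by norm_num) (Nat.pow_le_pow_right (by norm_num) hd)
    have := Real.rpow_le_rpow (by norm_num) h4 (show (0 : ℝ) ≤ (1 : ℝ) / 2 ^ d by positivity)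
    refine this.trans (le_of_eq ?_)
    have h2 := Real.pow_rpow_inv_natCast (show (0 : ℝ) ≤ 5 / 4 by norm_num)
      (show (2 ^ d : ℕ) ≠ 0 by positivity)
    push_cast at h2
    rwa [one_div]
  set t := (2 : ℝ) ^ ((1 : ℝ) / 2 ^ d) with ht
  set s := Real.sqrt 2 with hs
  have hs0 : 0 < s := by rw [hs]; positivity
  have hss : s ^ 2 = 2 := Real.sq_sqrt (by norm_num)
  have hs1 : 1 < s := by nlinarith
  have hs2 : s < 3 / 2 := by nlinarith
  rw [lt_div_iff₀ hs0] at hα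
  have hα4 : α < 1 / 4 := by nlinarith
  have hd2 : (2 : ℝ) ≤ d := by exact_mod_cast hd
  set c := t - 1 - s * α with hc
  have hc0 : 0 < c := by rw [hc]; linarith
  have hcle : c ≤ d * (1 - 2 * α) := by
    have h1 : c ≤ 1 / 4 - α := by rw [hc]; nlinarith
    nlinarith
  set b := c / (2 * s * d) with hb
  have hb0 : 0 ≤ b := by rw [hb]; positivity
  -- `b ≤ (1/2 - α) / √2`, whose square is the local spectral gap
  have hbb : b ^ 2 ≤ (1 / 2 - α) ^ 2 / 2 := by
    have h1 : b * s ≤ 1 / 2 - α := by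
      rw [hb, div_mul_eq_mul_div, div_le_iff₀ (by positivity)]
      nlinarith
    have h2 : (b * s) ^ 2 ≤ (1 / 2 - α) ^ 2 := pow_le_pow_left₀ (by positivity) h1 2
    rw [mul_pow, hss] at h2
    linarith
  set g := (1 / 2 - α) ^ 2 / 2 with hg
  have hg0 : 0 ≤ g := by positivity
  have hg1 : g ≤ 1 := by rw [hg]; nlinarith
  refine ⟨by linarith, fun i hi => ?_⟩
  have hid : (i : ℝ) + 1 ≤ d := by exact_mod_cast hi
  have hpow : b ^ (2 * d) ≤ g ^ (i + 1) := by
    rw [pow_mul]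
    exact (pow_le_pow_left₀ (by positivity) hbb d).trans (pow_le_pow_of_le_one hg0 hg1 hi)
  have hp0 : 0 ≤ b ^ (2 * d) := by positivity
  have hgp : g ^ (i + 1) ≤ 1 := pow_le_one₀ hg0 hg1
  have hD : (0 : ℝ) < 2 * ((d : ℝ) + 1) ^ 2 := by positivity
  constructor
  · rw [one_div_mul_eq_div, div_le_iff₀ hD]
    nlinarith
  · refine le_trans ?_ hpow
    rw [one_div_mul_eq_div, ← mul_div_assoc, div_le_iff₀ hD, mul_comm]
    refine mul_le_mul_of_nonneg_left ?_ hp0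
    nlinarith

end Walk

/-! ### Mixing from a bound on the quadratic form -/

/-- Mixing criterion: a bound `μ` on the Rayleigh quotient of the adjacency form, on functions
orthogonal to the constants, gives `μ`-rapid mixing. -/
lemma rapidMixing_of_form {U : Type} [Fintype U] [DecidableEq U] (A : U → U → ℕ) (μ : ℝ)
    (hA : ∀ u v, A u v = A v u) (hdeg : ∀ u, 0 < mdeg A u) (hμ : 0 < μ)
    (hform : ∀ f : U → ℝ, ∑ u, (mdeg A u : ℝ) * f u = 0 →
      |∑ u, ∑ v, (A u v : ℝ) * (f u * f v)| ≤ μ * ∑ u, (mdeg A u : ℝ) * f u ^ 2) :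
    IsRapidMixing A μ := by
  intro π0 hπ0 hπ1 t
  have hne : Nonempty U := by
    by_contra h
    rw [not_nonempty_iff] at h
    simp at hπ1
  have hd : ∀ u, (0 : ℝ) < mdeg A u := fun u => by exact_mod_cast hdeg u
  have hdsum : ∀ u, (mdeg A u : ℝ) = ∑ v, (A u v : ℝ) := fun u => by simp [mdeg]
  have hT : ∀ (x : U → ℝ) v, Matrix.vecMul x (transition A) v
      = ∑ u, x u * ((A u v : ℝ) / mdeg A u) := fun x v => rfl
  have hAr : ∀ u v, (A u v : ℝ) = A v u := fun u v => by rw [hA]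
  have hsum : ∀ x : U → ℝ, ∑ v, Matrix.vecMul x (transition A) v = ∑ v, x v := by
    intro x
    simp_rw [hT]
    rw [Finset.sum_comm]
    refine Finset.sum_congr rfl fun u _ => ?_
    rw [← Finset.mul_sum, ← Finset.sum_div, ← hdsum, div_self (hd u).ne', mul_one]
  -- the one-step contraction in the norm weighted by inverse degrees
  have hstep : ∀ x : U → ℝ, ∑ v, x v = 0 →
      ∑ v, (Matrix.vecMul x (transition A) v) ^ 2 / mdeg A v ≤
        μ ^ 2 * ∑ v, x v ^ 2 / mdeg A v := by
    intro x hx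
    set y := Matrix.vecMul x (transition A) with hy
    have hy0 : ∑ v, y v = 0 := by rw [hy, hsum, hx]
    have hQ : ∀ z : U → ℝ, ∑ v, z v = 0 →
        |∑ u, ∑ v, (A u v : ℝ) * (z u / mdeg A u * (z v / mdeg A v))| ≤
          μ * ∑ v, z v ^ 2 / mdeg A v := by
      intro z hz
      have h1 := hform (fun v => z v / mdeg A v) (by
        rw [← hz]
        exact Finset.sum_congr rfl fun u _ => by field_simp [(hd u).ne'])
      refine h1.trans_eq ?_
      congr 1
      exact Finset.sum_congr rfl fun u _ => by have := (hd u).ne'; field_simp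
    -- polarization against `y`, scaled by `μ`
    have hB : ∑ u, ∑ v, (A u v : ℝ) * (x u / mdeg A u * (y v / mdeg A v)) =
        ∑ v, y v ^ 2 / mdeg A v := by
      rw [Finset.sum_comm]
      refine Finset.sum_congr rfl fun v _ => ?_
      rw [sq, mul_div_assoc]
      nth_rw 2 [hy]
      rw [hT, Finset.sum_mul]
      exact Finset.sum_congr rfl fun u _ => by ring
    have hB' : ∑ u, ∑ v, (A u v : ℝ) * (y u / mdeg A u * (x v / mdeg A v)) =
        ∑ v, y v ^ 2 / mdeg A v := by
      rw [← hB, Finset.sum_comm]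
      refine Finset.sum_congr rfl fun v _ => Finset.sum_congr rfl fun u _ => ?_
      rw [hAr]; ring
    have hp := (abs_le.1 (hQ (fun v => μ * x v + y v) (by
      rw [Finset.sum_add_distrib, ← Finset.mul_sum, hx, hy0]; simp))).2
    have hn := (abs_le.1 (hQ (fun v => μ * x v - y v) (by
      rw [Finset.sum_sub_distrib, ← Finset.mul_sum, hx, hy0]; simp))).1
    have e1 : ∑ u, ∑ v, (A u v : ℝ) *
        ((μ * x u + y u) / mdeg A u * ((μ * x v + y v) / mdeg A v)) -
        ∑ u, ∑ v, (A u v : ℝ) *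
        ((μ * x u - y u) / mdeg A u * ((μ * x v - y v) / mdeg A v)) =
        4 * μ * ∑ v, y v ^ 2 / mdeg A v := by
      have : ∑ u, ∑ v, (A u v : ℝ) *
        ((μ * x u + y u) / mdeg A u * ((μ * x v + y v) / mdeg A v)) -
        ∑ u, ∑ v, (A u v : ℝ) *
        ((μ * x u - y u) / mdeg A u * ((μ * x v - y v) / mdeg A v)) =
        2 * μ * ∑ u, ∑ v, (A u v : ℝ) * (x u / mdeg A u * (y v / mdeg A v)) +
        2 * μ * ∑ u, ∑ v, (A u v : ℝ) * (y u / mdeg A u * (x v / mdeg A v)) := by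
        simp only [Finset.mul_sum, ← Finset.sum_add_distrib, ← Finset.sum_sub_distrib]
        exact Finset.sum_congr rfl fun u _ => Finset.sum_congr rfl fun v _ => by ring
      rw [this, hB, hB']; ring
    have e2 : ∑ v, (μ * x v + y v) ^ 2 / (mdeg A v : ℝ) + ∑ v, (μ * x v - y v) ^ 2 / (mdeg A v : ℝ)
        = 2 * μ ^ 2 * ∑ v, x v ^ 2 / (mdeg A v : ℝ) + 2 * ∑ v, y v ^ 2 / (mdeg A v : ℝ) := by
      simp only [Finset.mul_sum, ← Finset.sum_add_distrib]
      exact Finset.sum_congr rfl fun u _ => by ring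
    have h6 : μ * (2 * ∑ v, y v ^ 2 / (mdeg A v : ℝ)) ≤
        μ * (2 * (μ ^ 2 * ∑ v, x v ^ 2 / (mdeg A v : ℝ))) := by
      have : μ * (∑ v, (μ * x v + y v) ^ 2 / (mdeg A v : ℝ)) +
          μ * ∑ v, (μ * x v - y v) ^ 2 / (mdeg A v : ℝ) =
          μ * (2 * μ ^ 2 * ∑ v, x v ^ 2 / (mdeg A v : ℝ) + 2 * ∑ v, y v ^ 2 / (mdeg A v : ℝ)) := by
        rw [← mul_add, e2]
      linarith
    have := le_of_mul_le_mul_left h6 hμ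
    linarith
  set tot := ∑ u, (mdeg A u : ℝ) with htot
  have htot0 : 0 < tot := Finset.sum_pos (fun u _ => hd u) univ_nonempty
  have hstat1 : ∑ v, statDist A v = 1 := by
    simp only [statDist, ← Finset.sum_div]
    exact div_self htot0.ne'
  have hstatT : Matrix.vecMul (statDist A) (transition A) = statDist A := by
    funext v
    rw [hT]
    simp only [statDist]
    rw [hdsum v, Finset.sum_div]
    refine Finset.sum_congr rfl fun u _ => ?_
    rw [hAr u v]
    have := (hd u).ne'
    have := htot0.ne'
    field_simp
  have hdiff : ∀ t : ℕ, ∑ v, (Matrix.vecMul π0 (transition A ^ t) v - statDist A v) = 0 ∧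
      ∑ v, (Matrix.vecMul π0 (transition A ^ t) v - statDist A v) ^ 2 / mdeg A v ≤
        (μ ^ t) ^ 2 * ∑ v, (π0 v - statDist A v) ^ 2 / mdeg A v := by
    intro t
    induction t with
    | zero => simp [Finset.sum_sub_distrib, hπ1, hstat1]
    | succ t ih =>
      have e : ∀ v, Matrix.vecMul π0 (transition A ^ (t + 1)) v - statDist A v =
          Matrix.vecMul (fun v => Matrix.vecMul π0 (transition A ^ t) v - statDist A v)
            (transition A) v := by
        intro v
        have : (fun v => Matrix.vecMul π0 (transition A ^ t) v - statDist A v) =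
          Matrix.vecMul π0 (transition A ^ t) - statDist A := rfl
        rw [this, Matrix.sub_vecMul, hstatT, Matrix.vecMul_vecMul, pow_succ]
        rfl
      simp_rw [e]
      refine ⟨by rw [hsum]; exact ih.1, (hstep _ ih.1).trans ?_⟩
      calc _ ≤ μ ^ 2 * ((μ ^ t) ^ 2 * ∑ v, (π0 v - statDist A v) ^ 2 / mdeg A v) :=
            mul_le_mul_of_nonneg_left ih.2 (sq_nonneg _)
        _ = _ := by ring
  have hmax : ∀ v, (mdeg A v : ℝ) ≤ dmaxDeg A := fun v => by
    exact_mod_cast le_ciSup (Set.finite_range (mdeg A)).bddAbove v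
  have hmin : ∀ v, (dminDeg A : ℝ) ≤ mdeg A v := fun v => by
    exact_mod_cast ciInf_le (OrderBot.bddBelow _) v
  have hmin0 : (0 : ℝ) < dminDeg A := by
    obtain ⟨v, hv⟩ := ciInf_mem (mdeg A)
    have := hdeg v
    rw [hv] at this
    exact_mod_cast this
  -- the initial deviation is at most the norm of `π0` itself, by orthogonality to `π`
  have hinit : ∑ v, (π0 v - statDist A v) ^ 2 / mdeg A v ≤ 1 / dminDeg A := by
    have e : ∑ v, (π0 v - statDist A v) ^ 2 / (mdeg A v : ℝ) =
        ∑ v, π0 v ^ 2 / (mdeg A v : ℝ) - 1 / tot := by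
      have : ∀ v, (π0 v - statDist A v) ^ 2 / (mdeg A v : ℝ) =
          π0 v ^ 2 / (mdeg A v : ℝ) - 2 / tot * π0 v + statDist A v / tot := by
        intro v
        simp only [statDist, ← htot]
        have := (hd v).ne'
        have := htot0.ne'
        field_simp
        ring
      simp_rw [this]
      rw [Finset.sum_add_distrib, Finset.sum_sub_distrib, ← Finset.mul_sum, hπ1,
        ← Finset.sum_div, hstat1]
      ring
    have h1 : ∑ v, π0 v ^ 2 / (mdeg A v : ℝ) ≤ ∑ v, π0 v / dminDeg A := by
      refine Finset.sum_le_sum fun v _ => ?_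
      have hle : π0 v ≤ 1 := by
        rw [← hπ1]
        exact Finset.single_le_sum (fun u _ => hπ0 u) (mem_univ v)
      have := hπ0 v
      exact div_le_div₀ this (by nlinarith) hmin0 (hmin v)
    rw [← Finset.sum_div, hπ1] at h1
    have : 0 < 1 / tot := by positivity
    rw [e]; linarith
  have hmax0 : (0 : ℝ) ≤ dmaxDeg A := by positivity
  have hfin : ∑ v, (Matrix.vecMul π0 (transition A ^ t) v - statDist A v) ^ 2 ≤
      (dmaxDeg A : ℝ) / dminDeg A * (μ ^ t) ^ 2 := by
    calc ∑ v, (Matrix.vecMul π0 (transition A ^ t) v - statDist A v) ^ 2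
        ≤ ∑ v, (dmaxDeg A : ℝ) *
          ((Matrix.vecMul π0 (transition A ^ t) v - statDist A v) ^ 2 / mdeg A v) := by
          refine Finset.sum_le_sum fun v _ => ?_
          rw [← mul_div_assoc, le_div_iff₀ (hd v), mul_comm]
          exact mul_le_mul_of_nonneg_right (hmax v) (sq_nonneg _)
      _ ≤ (dmaxDeg A : ℝ) * ((μ ^ t) ^ 2 * (1 / dminDeg A)) := by
          rw [← Finset.mul_sum]
          refine mul_le_mul_of_nonneg_left ((hdiff t).2.trans ?_) hmax0
          exact mul_le_mul_of_nonneg_left hinit (sq_nonneg _)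
      _ = _ := by ring
  calc _ ≤ Real.sqrt ((dmaxDeg A : ℝ) / dminDeg A * (μ ^ t) ^ 2) := Real.sqrt_le_sqrt hfin
    _ = _ := by rw [Real.sqrt_mul (by positivity), Real.sqrt_sq (by positivity)]

/-- **Rapid mixing criterion.** If `X` is a pure `d`-dimensional `α`-skeleton expander with
`d > 1` and `0 < α < (2^(1/2^d) − 1)/√2`, then for every `0 ≤ i < d` the high order random
walk on dimension `i` of `X` (taken lazy for `i = 0`) is `μ`-rapidly mixing for
`μ = 1 − (1/(2(d+1)²)) ((2^(1/2^d) − 1 − √2 α)/(2√2 d))^(2d)`. -/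
theorem statement10 {V : Type} [DecidableEq V] [Fintype V] {d : ℕ} (X : SC V d)
    (hd : 1 < d) (α : ℝ) (hα0 : 0 < α)
    (hα : α < ((2 : ℝ) ^ ((1 : ℝ) / 2 ^ d) - 1) / Real.sqrt 2)
    (hX : X.IsSkeletonExpander α) :
    IsRapidMixing (lazy (X.adjG 0))
        (1 - 1 / (2 * ((d : ℝ) + 1) ^ 2) *
          (((2 : ℝ) ^ ((1 : ℝ) / 2 ^ d) - 1 - Real.sqrt 2 * α) /
              (2 * Real.sqrt 2 * (d : ℝ))) ^ (2 * d)) ∧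
      ∀ i : ℕ, 0 < i → i < d →
        IsRapidMixing (X.adjG i)
          (1 - 1 / (2 * ((d : ℝ) + 1) ^ 2) *
            (((2 : ℝ) ^ ((1 : ℝ) / 2 ^ d) - 1 - Real.sqrt 2 * α) /
                (2 * Real.sqrt 2 * (d : ℝ))) ^ (2 * d)) := by
  obtain ⟨hα2, hnum⟩ := numerics hd hα0 hα
  generalize 1 / (2 * ((d : ℝ) + 1) ^ 2) *
    (((2 : ℝ) ^ ((1 : ℝ) / 2 ^ d) - 1 - Real.sqrt 2 * α) /
        (2 * Real.sqrt 2 * (d : ℝ))) ^ (2 * d) = q at hnum ⊢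
  refine ⟨?_, fun i hi0 hi => ?_⟩
  · have hd0 : 0 < d := by lia
    obtain ⟨hq, hq'⟩ := hnum 0 hd0
    have hdeg : ∀ σ, mdeg (lazy (X.adjG 0)) σ = 2 * mdeg (X.adjG 0) σ := fun σ => by
      simp only [mdeg, lazy, Finset.sum_add_distrib, Finset.sum_ite_eq, mem_univ, if_true]
      ring
    refine rapidMixing_of_form _ _ (fun σ σ' => ?_) (fun σ => ?_) (by linarith)
      fun f hf => ?_
    · simp only [lazy]
      rw [adjG_symm]
      by_cases h : σ = σ'
      · rw [h]
      · rw [if_neg h, if_neg (Ne.symm h)]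
    · rw [hdeg]
      have := mdeg_adjG_pos X hd0 σ
      lia
    · simp only [hdeg] at hf ⊢
      push_cast at hf ⊢
      simp only [mul_assoc, ← Finset.mul_sum] at hf ⊢
      have hf' := (mul_eq_zero.1 hf).resolve_left two_ne_zero
      obtain ⟨h1, h2⟩ := adjG_form X hα0 hα2 hX hd0 f hf'
      have hS : 0 ≤ ∑ σ, (mdeg (X.adjG 0) σ : ℝ) * f σ ^ 2 :=
        Finset.sum_nonneg fun σ _ => by positivity
      -- the self-loops add the full weighted norm to the form
      have hL : ∑ σ, ∑ σ', (lazy (X.adjG 0) σ σ' : ℝ) * (f σ * f σ') =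
          ∑ σ, ∑ σ', (X.adjG 0 σ σ' : ℝ) * (f σ * f σ') +
            ∑ σ, (mdeg (X.adjG 0) σ : ℝ) * f σ ^ 2 := by
        rw [← Finset.sum_add_distrib]
        refine Finset.sum_congr rfl fun σ _ => ?_
        simp only [lazy, Nat.cast_add, Nat.cast_ite, Nat.cast_zero, add_mul,
          Finset.sum_add_distrib, ite_mul, zero_mul, Finset.sum_ite_eq, mem_univ, if_true]
        ring
      rw [hL]
      have hm := mul_le_mul_of_nonneg_right hq' hS
      generalize ∑ σ, (mdeg (X.adjG 0) σ : ℝ) * f σ ^ 2 = S at *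
      generalize ∑ σ, ∑ σ', (X.adjG 0 σ σ' : ℝ) * (f σ * f σ') = Q at *
      norm_num at h1 h2 hm
      rw [abs_le]
      constructor <;> nlinarith
  · obtain ⟨hq, hq'⟩ := hnum i hi
    refine rapidMixing_of_form _ _ (adjG_symm X i) (mdeg_adjG_pos X hi) (by linarith)
      fun f hf => ?_
    obtain ⟨h1, h2⟩ := adjG_form X hα0 hα2 hX hi f hf
    have hS : 0 ≤ ∑ σ, (mdeg (X.adjG i) σ : ℝ) * f σ ^ 2 :=
      Finset.sum_nonneg fun σ _ => by positivity
    have hi1 : (1 : ℝ) ≤ i := by exact_mod_cast hi0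
    have hg : 0 ≤ ((1 / 2 - α) ^ 2 / 2) ^ (i + 1) := by positivity
    generalize ((1 / 2 - α) ^ 2 / 2) ^ (i + 1) = g at *
    generalize ∑ σ, (mdeg (X.adjG i) σ : ℝ) * f σ ^ 2 = S at *
    generalize ∑ σ, ∑ σ', (X.adjG i σ σ' : ℝ) * (f σ * f σ') = Q at *
    have hi2 : (0 : ℝ) < (i : ℝ) + 1 := by linarith
    have hqg : ((i : ℝ) + 1) * q ≤ g := by linarith
    rw [abs_le]
    -- the smallest eigenvalue is at least `-1 / (i + 1) ≥ -1 / 2`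
    constructor
    · have h4 : 0 ≤ (2 * (1 - q) - 1) * S := mul_nonneg (by linarith) hS
      have h5 : ((i : ℝ) + 1) * (-(1 / 2 * S)) ≤ (i + 1) * Q := by nlinarith
      have := le_of_mul_le_mul_left h5 hi2
      linarith
    · have h3 := mul_le_mul_of_nonneg_right hqg hS
      refine le_of_mul_le_mul_left ?_ hi2
      linarith
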